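/- arXiv:1502.03607 — 2 statements merged into one kernel-verified Lean document; each statement's English description precedes it below -/
import Mathlib

section
/- Let (A, (·,·), R) be an extended affine root supersystem over a field F of characteristic zero. If δ ∈ R_ns is nonzero, then there exists η ∈ R_ns with (δ, η) ≠ 0. -/
open Pointwise

/-- A symmetric biadditive form with values in `F`. -/
structure IsSymForm {F : Type*} [Field F] {A : Type*} [AddCommGroup A]
    (form : A → A → F) : Prop where
  symm : ∀ a b, form a b = form b a
  add_left : ∀ a b c, form (a + b) c = form a c + form b c

/-- The radical `A⁰` of a form. -/
def formRadical {F : Type*} [Field F] {A : Type*} [AddCommGroup A]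
    (form : A → A → F) : Set A := {a | ∀ b, form a b = 0}

/-- The set of real roots `R_re = {α ∈ R | (α,α) ≠ 0} ∪ {0}`. -/
def reRoots {F : Type*} [Field F] {A : Type*} [AddCommGroup A]
    (form : A → A → F) (R : Set A) : Set A :=
  {α | α ∈ R ∧ form α α ≠ 0} ∪ {0}

/-- The set of nonsingular roots `R_ns = {α ∈ R \ A⁰ | (α,α) = 0} ∪ {0}`. -/
def nsRoots {F : Type*} [Field F] {A : Type*} [AddCommGroup A]
    (form : A → A → F) (R : Set A) : Set A :=
  {α | α ∈ R ∧ form α α = 0 ∧ α ∉ formRadical form} ∪ {0}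

/-- Extended affine root supersystem. -/
structure IsEARS {F : Type*} [Field F] [CharZero F] {A : Type*} [AddCommGroup A]
    (form : A → A → F) (R : Set A) extends IsSymForm form : Prop where
  zero_mem : (0 : A) ∈ R
  closure_eq_top : AddSubgroup.closure R = ⊤
  neg_mem : ∀ α ∈ R, -α ∈ R
  cartan : ∀ α ∈ R, form α α ≠ 0 → ∀ β ∈ R, ∃ k : ℤ, 2 * form α β = (k : F) * form α α
  string : ∀ α ∈ R, form α α ≠ 0 → ∀ β ∈ R, ∃ p q : ℕ,
      2 * form β α = ((p : F) - (q : F)) * form α α ∧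
      (∀ k : ℤ, β + k • α ∈ R ↔ -(p : ℤ) ≤ k ∧ k ≤ (q : ℤ))
  ns_string : ∀ α ∈ R, form α α = 0 → ∀ β ∈ R, form α β ≠ 0 →
      (β - α ∈ R ∨ β + α ∈ R)

/-- Locally finite root supersystem: an EARS with nondegenerate form. -/
def IsLFRSS {F : Type*} [Field F] [CharZero F] {A : Type*} [AddCommGroup A]
    (form : A → A → F) (R : Set A) : Prop :=
  IsEARS form R ∧ ∀ a : A, (∀ b, form a b = 0) → a = 0

/-- `α` and `β` are connected in `X` by a finite chain with consecutive
elements non-orthogonal. -/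
def ConnectedIn {F : Type*} [Field F] {A : Type*} [AddCommGroup A]
    (form : A → A → F) (X : Set A) (α β : A) : Prop :=
  ∃ (n : ℕ) (c : Fin (n + 1) → A), (∀ i, c i ∈ X) ∧ c 0 = α ∧ c (Fin.last n) = β ∧
    ∀ i : Fin n, form (c i.castSucc) (c i.succ) ≠ 0

/-- A connected subset. -/
def IsConnectedSet {F : Type*} [Field F] {A : Type*} [AddCommGroup A]
    (form : A → A → F) (X : Set A) : Prop :=
  ∀ α ∈ X, ∀ β ∈ X, ConnectedIn form X α β

/-- Irreducibility: `R_re ≠ {0}` and `R \ R⁰` is connected. -/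
def IsIrreducibleRSS {F : Type*} [Field F] {A : Type*} [AddCommGroup A]
    (form : A → A → F) (R : Set A) : Prop :=
  reRoots form R ≠ {0} ∧ IsConnectedSet form (R \ formRadical form)

/-- Sub-supersystem of a locally finite root supersystem. -/
def IsSubSupersystem {F : Type*} [Field F] {A : Type*} [AddCommGroup A]
    (form : A → A → F) (R S : Set A) : Prop :=
  S ⊆ R ∧
  (∀ a ∈ AddSubgroup.closure S, (∀ b ∈ AddSubgroup.closure S, form a b = 0) → a = 0) ∧
  (0 : A) ∈ S ∧
  (∀ α ∈ S, form α α ≠ 0 → ∀ β ∈ S, ∀ k : ℤ,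
      2 * form β α = (k : F) * form α α → β - k • α ∈ S) ∧
  (∀ γ ∈ S, form γ γ = 0 → ∀ β ∈ S, form β γ ≠ 0 → (γ - β ∈ S ∨ γ + β ∈ S))

/-- `Π` is an integral base of `R` (a `ℤ`-basis of the group generated by `R`). -/
def IsIntegralBase {F : Type*} [Field F] {A : Type*} [AddCommGroup A]
    (form : A → A → F) (R P : Set A) : Prop :=
  P ⊆ R ∧ LinearIndependent ℤ (fun p : P => (p : A)) ∧
    Submodule.span ℤ P = Submodule.span ℤ R

/-- `Π` is a base of `R`. -/
def IsBase {F : Type*} [Field F] {A : Type*} [AddCommGroup A]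
    (form : A → A → F) (R P : Set A) : Prop :=
  IsIntegralBase form R P ∧
  ∀ α ∈ R \ formRadical form, ∃ (n : ℕ) (a : Fin n → A) (r : Fin n → ℤ),
    (∀ i, a i ∈ P) ∧ (∀ i, r i = 1 ∨ r i = -1) ∧
    α = ∑ i, r i • a i ∧
    ∀ t : Fin n, (∑ i ∈ Finset.Iic t, r i • a i) ∈ R \ formRadical form

namespace IsSymForm

variable {F A : Type*} [Field F] [AddCommGroup A] {form : A → A → F}

theorem form_add_right (hf : IsSymForm form) (a b c : A) :
    form a (b + c) = form a b + form a c := by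
  rw [hf.symm, hf.add_left, hf.symm b, hf.symm c]

/-- The functional `(a, ·)`, bundled so that facts on additive maps apply to it. -/
def toAddMonoidHom (hf : IsSymForm form) (a : A) : A →+ F :=
  AddMonoidHom.mk' (form a) (hf.form_add_right a)

theorem form_sub_zsmul_right (hf : IsSymForm form) (a b c : A) (k : ℤ) :
    form a (b - k • c) = form a b - k * form a c := by
  calc
    hf.toAddMonoidHom a (b - k • c)
        = hf.toAddMonoidHom a b - k • hf.toAddMonoidHom a c := by rw [map_sub, map_zsmul]
    _ = form a b - k * form a c := by rw [zsmul_eq_mul]; rfl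

theorem form_sub_zsmul_left (hf : IsSymForm form) (a b c : A) (k : ℤ) :
    form (a - k • b) c = form a c - k * form b c := by
  rw [hf.symm, hf.form_sub_zsmul_right, hf.symm c a, hf.symm c b]

theorem form_reflection_self (hf : IsSymForm form) {α β : A} {k : ℤ}
    (hk : 2 * form β α = k * form α α) :
    form (β - k • α) (β - k • α) = form β β := by
  rw [hf.form_sub_zsmul_left, hf.form_sub_zsmul_right, hf.form_sub_zsmul_right, hf.symm α β]
  linear_combination -(k : F) * hk

theorem exists_mem_form_ne_zero (hf : IsSymForm form) {R : Set A}
    (hR : AddSubgroup.closure R = ⊤) {δ : A} (hδ : δ ∉ formRadical form) :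
    ∃ β ∈ R, form δ β ≠ 0 := by
  contrapose! hδ
  have hzero : hf.toAddMonoidHom δ = 0 := AddMonoidHom.eq_of_eqOn_dense hR hδ
  exact fun b => DFunLike.congr_fun hzero b

theorem mem_nsRoots_of_form_ne_zero (hf : IsSymForm form) {R : Set A} {δ η : A}
    (hη : η ∈ R) (hηη : form η η = 0) (hδη : form δ η ≠ 0) : η ∈ nsRoots form R :=
  Or.inl ⟨hη, hηη, fun hrad => hδη ((hf.symm δ η).trans (hrad δ))⟩

end IsSymForm

/-- Stability of `R` under the reflections `β ↦ β - kα`, `k = 2(β,α)/(α,α)`, in its nonzero real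
roots `α`. As `k` acts on `A`, it is required to be an integer; the quotient is stated without
division. -/
def IsReflectionStable {F A : Type*} [Field F] [AddCommGroup A]
    (form : A → A → F) (R : Set A) : Prop :=
  ∀ α ∈ R, form α α ≠ 0 → ∀ β ∈ R, ∃ k : ℤ, 2 * form β α = k * form α α ∧ β - k • α ∈ R

-- The reflection sends `β` to `β + (q - p)α`, a member of its root string as `-p ≤ q - p ≤ q`.
theorem IsEARS.isReflectionStable {F A : Type*} [Field F] [CharZero F] [AddCommGroup A]
    {form : A → A → F} {R : Set A} (h : IsEARS form R) : IsReflectionStable form R := by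
  intro α hα hαα β hβ
  obtain ⟨p, q, hpq, hstring⟩ := h.string α hα hαα β hβ
  refine ⟨p - q, by exact_mod_cast hpq, ?_⟩
  rw [sub_eq_add_neg, ← neg_smul]
  exact (hstring _).2 ⟨by lia, by lia⟩

theorem stmt1_general {F A : Type*} [Field F] [NeZero (2 : F)] [AddCommGroup A]
    {form : A → A → F} {R : Set A} (hf : IsSymForm form) (hR : AddSubgroup.closure R = ⊤)
    (hrefl : IsReflectionStable form R) {δ : A} (hδ : δ ∈ nsRoots form R) (hδ0 : δ ≠ 0) :
    ∃ η ∈ nsRoots form R, form δ η ≠ 0 := by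
  obtain ⟨hδR, hδδ, hδrad⟩ := hδ.resolve_right hδ0
  obtain ⟨β, hβ, hδβ⟩ := hf.exists_mem_form_ne_zero hR hδrad
  by_cases hββ : form β β = 0
  · exact ⟨β, hf.mem_nsRoots_of_form_ne_zero hβ hββ hδβ, hδβ⟩
  · -- For `β` real, the reflection `η` of `δ` in `β` satisfies `(δ, η) = -k(δ, β)` and `k ≠ 0`.
    obtain ⟨k, hk, hη⟩ := hrefl β hβ hββ δ hδR
    have hk0 : (k : F) ≠ 0 := left_ne_zero_of_mul (hk ▸ mul_ne_zero two_ne_zero hδβ)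
    have hδη : form δ (δ - k • β) ≠ 0 := by
      rw [hf.form_sub_zsmul_right, hδδ, zero_sub]
      exact neg_ne_zero.2 (mul_ne_zero hk0 hδβ)
    have hηη : form (δ - k • β) (δ - k • β) = 0 := (hf.form_reflection_self hk).trans hδδ
    exact ⟨_, hf.mem_nsRoots_of_form_ne_zero hη hηη hδη, hδη⟩

theorem stmt1 {F : Type*} [Field F] [CharZero F] {A : Type*} [AddCommGroup A]
    (form : A → A → F) (R : Set A) (h : IsEARS form R)
    (δ : A) (hδ : δ ∈ nsRoots form R) (hδ0 : δ ≠ 0) :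
    ∃ η ∈ nsRoots form R, form δ η ≠ 0 :=
  stmt1_general h.toIsSymForm h.closure_eq_top h.isReflectionStable hδ hδ0
end

section
/- Let (A, (·,·), R) be an irreducible locally finite root supersystem over a field F of characteristic zero. Then R contains an integral base, i.e., there is a subset Π of R which is a ℤ-basis of A; in particular, A is a free abelian group. -/
open Pointwise

/-! The real roots split into orthogonal irreducible components, and the form on the span of a
component is, up to a scalar, positive definite, so that each component has a base. When it is
finite, its indecomposable positive roots form one. When it is infinite, Ramsey's theorem yields an
infinite clique of roots with pairwise products half their norm, like the roots `ε₀ - εₓ`. A maximal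
clique determines orthogonal coordinates and spans the vectors of degree zero, and a root of minimal
nonzero degree completes it to a base.

If `R` is not contained in the lattice spanned by the real roots, connectedness shows that this
lattice and any one root `α` outside it generate the group. If no nonzero multiple of `α` lies in
the lattice, `α` completes a base of the real roots. Otherwise `α` replaces an element `π` of a
suitable base of the real roots, for which `k • α - π` is, for some `k`, a combination of the other
elements. Either twice the projection of `α` to the span of some component is a root of it, and `π`
is this root, or `α` is a rational combination of the roots of two components, and `k • α` is the
sum of bases of both, consisting of the roots whose coroot takes the value `1` at `α`. -/

/-! ### Positive definite root systems -/

/-- The roots `C` of a crystallographic root system in an abelian group `L` spanned by `C`, with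
respect to a positive definite integral form `B`. There is no finiteness condition, and
irreducibility is encoded by the existence of common neighbours. -/
structure IsPosDefRootSystem {L : Type*} [AddCommGroup L] (B : LinearMap.BilinForm ℤ L)
    (C : Set L) : Prop where
  symm : ∀ x y, B x y = B y x
  pos : ∀ x, x ≠ 0 → 0 < B x x
  span_eq_top : Submodule.span ℤ C = ⊤
  ne_zero : ∀ α ∈ C, α ≠ 0
  integral : ∀ α ∈ C, ∀ β ∈ C, ∃ k : ℤ, 2 * B α β = k * B α α
  reflection_mem : ∀ α ∈ C, ∀ β ∈ C, ∀ k : ℤ, 2 * B α β = k * B α α → β - k • α ∈ C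
  exists_common_neighbor : ∀ α ∈ C, ∀ β ∈ C, ∃ δ ∈ C, B α δ ≠ 0 ∧ B δ β ≠ 0

theorem exists_injective_pairwise_or_pairwise_not {α : Type*} [Infinite α] (r : α → α → Prop)
    (hr : ∀ x y, r x y → r y x) :
    ∃ f : ℕ → α, Function.Injective f ∧
      (Pairwise (fun i j => r (f i) (f j)) ∨ Pairwise (fun i j => ¬ r (f i) (f j))) := by
  let U := Filter.hyperfilter α
  have extract : ∀ s : α → α → Prop, (∀ x y, s x y → s y x) → (∀ᶠ x in U, ∀ᶠ y in U, s x y) →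
      ∃ f : ℕ → α, Function.Injective f ∧ Pairwise (fun i j => s (f i) (f j)) := by
    intro s hs hU
    have : Std.Symm fun x y => s x y ∧ x ≠ y := ⟨fun x y h => ⟨hs x y h.1, h.2.symm⟩⟩
    obtain ⟨f, -, hf⟩ := exists_seq_of_forall_finset_exists' (fun x => ∀ᶠ y in U, s x y)
      (fun x y => s x y ∧ x ≠ y) fun t ht => by
        have hne : ∀ x : α, ∀ᶠ y : α in U, x ≠ y := fun x =>
          Filter.mem_of_superset (Set.finite_singleton x).compl_mem_hyperfilter fun _ => Ne.symm
        have hall : ∀ᶠ y in U, ∀ x ∈ t, s x y ∧ x ≠ y :=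
          (Filter.eventually_all_finset t).2 fun x hx => (ht x hx).and (hne x)
        exact (hU.and hall).exists
    exact ⟨f, fun i j e => by_contra fun hij => (hf hij).2 e, fun i j hij => (hf hij).1⟩
  rcases U.eventually_or.1 (Filter.Eventually.of_forall fun x => em (∀ᶠ y in U, r x y)) with h | h
  · obtain ⟨f, hf, hp⟩ := extract r hr h
    exact ⟨f, hf, Or.inl hp⟩
  · obtain ⟨f, hf, hp⟩ := extract (fun x y => ¬ r x y) (fun x y h h' => h (hr y x h'))
      (h.mono fun x hx => Ultrafilter.eventually_not.2 hx)
    exact ⟨f, hf, Or.inr hp⟩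

namespace IsPosDefRootSystem

variable {L : Type*} [AddCommGroup L] {B : LinearMap.BilinForm ℤ L} {C : Set L}

theorem nonneg (h : IsPosDefRootSystem B C) (x : L) : 0 ≤ B x x := by
  rcases eq_or_ne x 0 with rfl | hx
  · simp
  · exact (h.pos x hx).le

theorem pos_of_mem (h : IsPosDefRootSystem B C) {α : L} (hα : α ∈ C) : 0 < B α α :=
  h.pos α (h.ne_zero α hα)

theorem neg_mem (h : IsPosDefRootSystem B C) {α : L} (hα : α ∈ C) : -α ∈ C := by
  have := h.reflection_mem α hα α hα 2 rfl
  rwa [two_smul, sub_add_cancel_left] at this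

theorem sub_mem (h : IsPosDefRootSystem B C) {α β : L} (hα : α ∈ C) (hβ : β ∈ C)
    (hpos : 0 < B α β) (hne : α ≠ β) : α - β ∈ C := by
  have hα0 := h.pos_of_mem hα
  have hβ0 := h.pos_of_mem hβ
  obtain ⟨k, hk⟩ := h.integral α hα β hβ
  obtain ⟨m, hm⟩ := h.integral β hβ α hα
  have refl_α := h.reflection_mem α hα β hβ k hk
  have refl_β := h.reflection_mem β hβ α hα m hm
  rw [h.symm β α] at hm
  have hk0 : 0 < k := by by_contra hc; nlinarith
  have hm0 : 0 < m := by by_contra hc; nlinarith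
  have hsub := h.pos (α - β) (sub_ne_zero.2 hne)
  simp only [map_sub, LinearMap.sub_apply, h.symm β α] at hsub
  obtain rfl | rfl : k = 1 ∨ m = 1 := by
    by_contra! hc
    have hk2 : 2 ≤ k := by omega
    have hm2 : 2 ≤ m := by omega
    nlinarith
  · simpa using h.neg_mem refl_α
  · simpa using refl_β

theorem exists_forall_apply_ne_zero (h : IsPosDefRootSystem B C) (hC : C.Finite) :
    ∃ x, ∀ α ∈ C, B x α ≠ 0 := by
  by_contra! hc
  obtain ⟨α, hα, hind⟩ := Submodule.exists_finiteIndex_of_cover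
    (s := hC.toFinset) (p := fun α => LinearMap.ker (B α)) <| by
      refine Set.eq_univ_of_forall fun x => ?_
      obtain ⟨α, hα, e⟩ := hc x
      simp only [Set.mem_iUnion]
      exact ⟨α, hC.mem_toFinset.2 hα, (h.symm α x).trans e⟩
  have hmul := AddSubgroup.nsmul_index_mem (LinearMap.ker (B α)).toAddSubgroup α
  have hmul' : B α ((LinearMap.ker (B α)).toAddSubgroup.index • α) = 0 := hmul
  rw [map_nsmul, smul_eq_zero] at hmul'
  exact hmul'.elim hind.index_ne_zero (h.pos_of_mem (hC.mem_toFinset.1 hα)).ne'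

theorem exists_base_of_finite (h : IsPosDefRootSystem B C) (hC : C.Finite) :
    ∃ P ⊆ C, LinearIndepOn ℤ id P ∧ Submodule.span ℤ P = ⊤ := by
  obtain ⟨x, hx⟩ := h.exists_forall_apply_ne_zero hC
  have : Finite C := hC
  let _ : InvolutiveNeg C :=
    { neg := fun α => ⟨-α, h.neg_mem α.2⟩
      neg_neg := fun α => Subtype.ext (neg_neg _) }
  let v : C → L := Subtype.val
  let f : L →+ ℤ := (B x).toAddMonoidHom
  have hf : ∀ i, f (v i) ≠ 0 := fun i => hx i i.2
  let P := IsAddIndecomposable.baseOf v f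
  have hobtuse : Pairwise fun i j : P => B (v i) (v j) ≤ 0 := by
    intro i j hij
    by_contra! hpos
    have hne : (i : C) ≠ j := Subtype.coe_ne_coe.2 hij
    exact IsAddIndecomposable.pairwise_baseOf_sub_notMem v (fun _ => rfl) f hf i.2 j.2 hne
      ⟨⟨_, h.sub_mem i.1.2 j.1.2 hpos (Subtype.coe_ne_coe.2 hne)⟩, rfl⟩
  have hindep : LinearIndependent ℤ fun i : P => v i :=
    LinearMap.BilinForm.linearIndependent_of_pairwise_le_zero B h.pos (B x) _
      (fun i => i.2.1) hobtuse
  refine ⟨v '' P, ?_, LinearIndepOn.id_image hindep, ?_⟩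
  · rintro - ⟨i, -, rfl⟩
    exact i.2
  · have hclosure := AddSubgroup.closure_image_isAddIndecomposable_baseOf v (fun _ => rfl) f hf
    rw [Subtype.range_coe, ← Submodule.span_int_eq_addSubgroupClosure,
      ← Submodule.span_int_eq_addSubgroupClosure, h.span_eq_top] at hclosure
    exact Submodule.toAddSubgroup_injective hclosure

/-- A bounded norm is incompatible with a positive constant product with a fixed vector. -/
theorem exists_pos_of_forall_eq (h : IsPosDefRootSystem B C) {δ : L} {r s : ℤ} (hs : 0 < s)
    (f : ℕ → L) (hδ : ∀ i, B δ (f i) = s) (hr : ∀ i, B (f i) (f i) = r) :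
    ∃ i j, i ≠ j ∧ 0 < B (f i) (f j) := by
  by_contra! hc
  have hr0 : 0 < r := by
    rw [← hr 0]
    exact h.pos _ fun e => hs.ne' (by rw [← hδ 0, e, map_zero])
  have hsum : ∀ n, B (∑ i ∈ Finset.range n, f i) (∑ i ∈ Finset.range n, f i) ≤ n * r := by
    intro n
    induction n with
    | zero => simp
    | succ n ih =>
      have hcross : B (∑ i ∈ Finset.range n, f i) (f n) ≤ 0 := by
        rw [map_sum, LinearMap.sum_apply]
        exact Finset.sum_nonpos fun i hi => hc i n (Finset.mem_range.1 hi).ne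
      rw [Finset.sum_range_succ]
      simp only [map_add, LinearMap.add_apply, hr, h.symm (f n)]
      push_cast
      linarith
  have hdot : ∀ n : ℕ, B δ (∑ i ∈ Finset.range n, f i) = n * s := by simp [hδ]
  obtain ⟨n, hn⟩ := exists_nat_gt (r * B δ δ)
  have := h.nonneg (r • δ - ∑ i ∈ Finset.range n, f i)
  simp only [map_sub, LinearMap.sub_apply, map_smul, LinearMap.smul_apply, smul_eq_mul, hdot,
    h.symm _ δ] at this
  have hns : (n : ℤ) * r * 1 ≤ n * r * s := mul_le_mul_of_nonneg_left hs (by positivity)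
  nlinarith [hsum n]

end IsPosDefRootSystem

/-- A clique of roots: the elements of `K` have norm `2 * c` and pairwise products `c`, like the
roots `ε₀ - εₓ` of a system of type `A` sharing the index `0`. -/
structure IsClique {L : Type*} [AddCommGroup L] (B : LinearMap.BilinForm ℤ L) (C : Set L) (c : ℤ)
    (K : Set L) : Prop where
  subset : K ⊆ C
  norm : ∀ x ∈ K, B x x = 2 * c
  pairwise : K.Pairwise fun x y => B x y = c

theorem IsClique.exists_maximal {L : Type*} [AddCommGroup L] {B : LinearMap.BilinForm ℤ L}
    {C : Set L} {c : ℤ} {K : Set L} (hK : IsClique B C c K) :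
    ∃ M, K ⊆ M ∧ Maximal (IsClique B C c) M := by
  refine zorn_subset_nonempty {K | IsClique B C c K} (fun S hS hchain _ => ?_) K hK
  refine ⟨⋃₀ S, ⟨Set.sUnion_subset fun M hM => (hS hM).subset, ?_, ?_⟩, fun M hM =>
    Set.subset_sUnion_of_mem hM⟩
  · rintro x ⟨M, hM, hx⟩
    exact (hS hM).norm x hx
  · exact (Set.pairwise_sUnion hchain.directedOn).2 fun M hM => (hS hM).pairwise

namespace IsPosDefRootSystem

variable {L : Type*} [AddCommGroup L] {B : LinearMap.BilinForm ℤ L} {C : Set L}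

theorem apply_sq_le (h : IsPosDefRootSystem B C) (x y : L) : B x y ^ 2 ≤ B x x * B y y :=
  LinearMap.BilinForm.apply_sq_le_of_symm B h.nonneg ⟨h.symm⟩ x y

theorem bounds_of_apply_ne_zero (h : IsPosDefRootSystem B C) {α β : L} (hα : α ∈ C) (hβ : β ∈ C)
    (hne : B α β ≠ 0) : |B α β| ≤ 2 * B α α ∧ B β β ≤ 4 * B α α := by
  have hβ0 := h.pos_of_mem hβ
  obtain ⟨m, hm⟩ := h.integral β hβ α hα
  rw [h.symm β α] at hm
  have hcs := h.apply_sq_le α β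
  have hm1 : 1 ≤ |m| := Int.one_le_abs fun e => hne (by subst e; linarith)
  have hmβ : 2 * |B α β| = |m| * B β β := by
    simpa only [abs_mul, abs_two, abs_of_pos hβ0] using congrArg abs hm
  have hβα : B β β ≤ 2 * |B α β| := by nlinarith
  rw [← sq_abs] at hcs
  have hle : |B α β| ≤ 2 * B α α := by
    by_contra! hc
    nlinarith [abs_pos.2 hne]
  exact ⟨hle, by linarith⟩

theorem exists_infinite_neighbors (h : IsPosDefRootSystem B C) (hC : C.Infinite) :
    ∃ δ ∈ C, {β ∈ C | B δ β ≠ 0}.Infinite := by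
  by_contra! hc
  obtain ⟨α, hα⟩ := hC.nonempty
  refine hC (((hc α hα).biUnion fun δ hδ => hc δ hδ.1).subset fun β hβ => ?_)
  obtain ⟨δ, hδ, h1, h2⟩ := h.exists_common_neighbor α hα β hβ
  exact Set.mem_biUnion (x := δ) ⟨hδ, h1⟩ ⟨hβ, h2⟩

theorem exists_infinite_subset_of_constant (h : IsPosDefRootSystem B C) (hC : C.Infinite) :
    ∃ δ, ∃ s > 0, ∃ r, {β ∈ C | B δ β = s ∧ B β β = r}.Infinite := by
  obtain ⟨δ, hδ, hinf⟩ := h.exists_infinite_neighbors hC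
  obtain ⟨⟨s, r⟩, hsr, hfib⟩ : ∃ p ∈ (fun β => (B δ β, B β β)) '' {β ∈ C | B δ β ≠ 0},
      ({β ∈ C | B δ β ≠ 0} ∩ (fun β => (B δ β, B β β)) ⁻¹' {p}).Infinite := by
    by_contra! hc
    refine hinf (Set.Finite.of_finite_fibers (fun β => (B δ β, B β β)) ?_ hc)
    refine ((Set.finite_Icc (-(2 * B δ δ)) (2 * B δ δ)).prod
      (Set.finite_Icc 0 (4 * B δ δ))).subset ?_
    rintro - ⟨β, ⟨hβ, hne⟩, rfl⟩
    have := h.bounds_of_apply_ne_zero hδ hβ hne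
    exact ⟨abs_le.1 this.1, h.nonneg β, this.2⟩
  have hs : s ≠ 0 := by
    obtain ⟨β, ⟨-, hne⟩, e⟩ := hsr
    exact fun hs => hne ((Prod.ext_iff.1 e).1.trans hs)
  have hfib' : ∀ β ∈ {β ∈ C | B δ β ≠ 0} ∩ (fun β => (B δ β, B β β)) ⁻¹' {(s, r)},
      β ∈ C ∧ B δ β = s ∧ B β β = r :=
    fun β hβ => ⟨hβ.1.1, Prod.ext_iff.1 hβ.2⟩
  rcases hs.lt_or_gt with hs | hs
  · refine ⟨-δ, -s, neg_pos.2 hs, r, hfib.mono fun β hβ => ?_⟩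
    obtain ⟨h1, h2, h3⟩ := hfib' β hβ
    exact ⟨h1, by simp [h2], h3⟩
  · exact ⟨δ, s, hs, r, hfib.mono hfib'⟩

theorem exists_infinite_clique (h : IsPosDefRootSystem B C) (hC : C.Infinite) :
    ∃ c K, IsClique B C c K ∧ K.Infinite := by
  obtain ⟨δ, s, hs, r, hinf⟩ := h.exists_infinite_subset_of_constant hC
  have : Infinite {β ∈ C | B δ β = s ∧ B β β = r} := hinf.to_subtype
  obtain ⟨f, hf, hpos | hneg⟩ := exists_injective_pairwise_or_pairwise_not
    (fun x y : {β ∈ C | B δ β = s ∧ B β β = r} => 0 < B x y) fun x y hxy => h.symm x y ▸ hxy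
  · have hmem : ∀ i, (f i : L) ∈ C := fun i => (f i).2.1
    have hnorm : ∀ i, B (f i) (f i) = r := fun i => (f i).2.2.2
    have hinj : Function.Injective fun i => (f i : L) := Subtype.val_injective.comp hf
    have hprod : ∀ i j, i ≠ j → 2 * B (f i) (f j) = r := by
      intro i j hij
      obtain ⟨k, hk⟩ := h.integral _ (hmem i) _ (hmem j)
      have hsub := h.pos (f i - f j) (sub_ne_zero.2 (hinj.ne hij))
      simp only [map_sub, LinearMap.sub_apply, h.symm (f j) (f i), hnorm] at hsub hk
      have hij := hpos hij
      obtain rfl : k = 1 := by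
        have : 0 < r := hnorm i ▸ h.pos_of_mem (hmem i)
        have : 0 < k := by by_contra hc; nlinarith
        have : k < 2 := by by_contra hc; nlinarith
        omega
      simpa using hk
    refine ⟨B (f 0) (f 1), Set.range fun i => (f i : L), ⟨?_, ?_, ?_⟩,
      Set.infinite_range_of_injective hinj⟩
    · rintro - ⟨i, rfl⟩
      exact hmem i
    · rintro - ⟨i, rfl⟩
      exact (hnorm i).trans (hprod 0 1 zero_ne_one).symm
    · rintro - ⟨i, rfl⟩ - ⟨j, rfl⟩ hij
      have := hprod i j fun e => hij (by rw [e])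
      linarith [hprod 0 1 zero_ne_one]
  · obtain ⟨i, j, hij, hpos⟩ := h.exists_pos_of_forall_eq hs (fun i => (f i : L))
      (fun i => (f i).2.2.1) (fun i => (f i).2.2.2)
    exact absurd hpos (hneg hij)

end IsPosDefRootSystem

/-- A linear map expressing the vectors of `L` in terms of orthogonal vectors `ε₀` and `εₓ`, for
`x ∈ K`, so that `x = ε₀ - εₓ`: the index of `ε₀` is `none`. -/
structure IsCliqueCoord {L : Type*} [AddCommGroup L] (B : LinearMap.BilinForm ℤ L) (c : ℤ)
    (K : Set L) (e : L →ₗ[ℤ] Option K →₀ ℤ) : Prop where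
  apply_eq : ∀ a (x : K), B a x = c * (e a none - e a (some x))

theorem eq_zero_of_forall_eq_none {ι : Type*} [Infinite ι] {w : Option ι →₀ ℤ}
    (hw : ∀ i, w none = w (some i)) : w = 0 := by
  obtain ⟨i, hi⟩ := Infinite.exists_notMem_finset (w.support.preimage some
    (Option.some_injective ι).injOn)
  have h0 : w none = 0 := by simpa [hw i] using hi
  ext (_ | j)
  · exact h0
  · exact (hw j).symm.trans h0

namespace IsPosDefRootSystem

variable {L : Type*} [AddCommGroup L] {B : LinearMap.BilinForm ℤ L} {C : Set L} {c : ℤ} {K : Set L}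

theorem pos_of_clique (h : IsPosDefRootSystem B C) (hK : IsClique B C c K) (hne : K.Nonempty) :
    0 < c := by
  obtain ⟨x, hx⟩ := hne
  have := h.pos_of_mem (hK.subset hx)
  rw [hK.norm x hx] at this
  linarith

theorem dvd_apply_of_mem_clique (h : IsPosDefRootSystem B C) (hK : IsClique B C c K) {x : L}
    (hx : x ∈ K) (a : L) : c ∣ B a x := by
  have ha : a ∈ Submodule.span ℤ C := h.span_eq_top ▸ Submodule.mem_top
  induction ha using Submodule.span_induction with
  | mem β hβ =>
    obtain ⟨k, hk⟩ := h.integral x (hK.subset hx) β hβ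
    rw [hK.norm x hx, h.symm x β] at hk
    exact ⟨k, by linarith⟩
  | zero => simp
  | add a b _ _ iha ihb => simpa using dvd_add iha ihb
  | smul n a _ iha => simpa using iha.mul_left n

theorem finite_image_apply_clique (h : IsPosDefRootSystem B C) (hK : IsClique B C c K) (a : L) :
    (B a '' K).Finite := by
  refine (Set.finite_Icc (-(B a a * (2 * c))) (B a a * (2 * c))).subset ?_
  rintro - ⟨x, hx, rfl⟩
  have hsq := h.apply_sq_le a x
  rw [hK.norm x hx] at hsq
  exact abs_le.1 (((Int.le_self_sq _).trans_eq (sq_abs _)).trans hsq)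

/-- If two values were attained infinitely often, the differences of paired elements would be
orthogonal vectors of norm `2 * c` with the same nonzero product with `a`. -/
theorem eq_of_infinite_fibers_clique (h : IsPosDefRootSystem B C) (hK : IsClique B C c K) (a : L)
    {v w : ℤ} (hv : {x ∈ K | B a x = v}.Infinite) (hw : {x ∈ K | B a x = w}.Infinite) : v = w := by
  have no_lt : ∀ v w : ℤ, {x ∈ K | B a x = v}.Infinite → {x ∈ K | B a x = w}.Infinite →
      ¬ w < v := by
    intro v w hv hw hlt
    let x := hv.natEmbedding
    let y := hw.natEmbedding
    have hxy : ∀ i j, B (x i) (y j) = c := fun i j =>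
      hK.pairwise (x i).2.1 (y j).2.1 fun e => hlt.ne <| by rw [← (x i).2.2, e, (y j).2.2]
    obtain ⟨i, j, hij, hpos⟩ := h.exists_pos_of_forall_eq (δ := a) (r := 2 * c)
      (sub_pos.2 hlt) (fun i => (x i : L) - y i)
      (fun i => by rw [map_sub, (x i).2.2, (y i).2.2])
      (fun i => by
        simp only [map_sub, LinearMap.sub_apply, h.symm (y i) (x i), hxy,
          hK.norm _ (x i).2.1, hK.norm _ (y i).2.1]
        ring)
    have hxx := hK.pairwise (x i).2.1 (x j).2.1 (Subtype.coe_ne_coe.2 (x.injective.ne hij))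
    have hyy := hK.pairwise (y i).2.1 (y j).2.1 (Subtype.coe_ne_coe.2 (y.injective.ne hij))
    simp only [map_sub, LinearMap.sub_apply, h.symm (y i) (x j), hxy, hxx, hyy] at hpos
    linarith
  exact le_antisymm (not_lt.1 (no_lt v w hv hw)) (not_lt.1 (no_lt w v hw hv))

theorem exists_finite_setOf_apply_ne_clique (h : IsPosDefRootSystem B C) (hK : IsClique B C c K)
    (hinf : K.Infinite) (a : L) : ∃ v, {x ∈ K | B a x ≠ v}.Finite := by
  obtain ⟨v, hv⟩ : ∃ v, {x ∈ K | B a x = v}.Infinite := by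
    by_contra! hc
    exact hinf (Set.Finite.of_finite_fibers (B a) (h.finite_image_apply_clique hK a)
      fun v _ => hc v)
  refine ⟨v, Set.Finite.of_finite_fibers (B a) ((h.finite_image_apply_clique hK a).subset
    (Set.image_mono (Set.sep_subset _ _))) ?_⟩
  rintro - ⟨x, ⟨-, hne⟩, rfl⟩
  by_contra hfib
  exact hne (h.eq_of_infinite_fibers_clique hK a
    (Set.Infinite.mono (fun y hy => ⟨hy.1.1, hy.2⟩) hfib) hv)

theorem exists_isCliqueCoord (h : IsPosDefRootSystem B C) (hK : IsClique B C c K)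
    (hinf : K.Infinite) : ∃ e, IsCliqueCoord B c K e := by
  have hc := h.pos_of_clique hK hinf.nonempty
  have hcoord : ∀ a, ∃ w : Option K →₀ ℤ, ∀ x : K, B a x = c * (w none - w (some x)) := by
    intro a
    obtain ⟨v, hv⟩ := h.exists_finite_setOf_apply_ne_clique hK hinf a
    choose k hk using fun x : K => h.dvd_apply_of_mem_clique hK x.2 a
    obtain ⟨x, hx, hxv⟩ : ∃ x ∈ K, B a x = v := by
      by_contra! hne
      exact hinf (hv.subset fun x hx => ⟨hx, hne x hx⟩)
    let w : Option K → ℤ := fun i => i.elim (k ⟨x, hx⟩) fun y => k ⟨x, hx⟩ - k y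
    have hfin : w.support.Finite := by
      refine ((Set.finite_singleton none).union
        ((hv.preimage Subtype.val_injective.injOn).image some)).subset ?_
      rintro (_ | y) hy
      · exact Or.inl rfl
      · refine Or.inr ⟨y, ⟨y.2, fun e => hy (sub_eq_zero.2 ?_)⟩, rfl⟩
        exact mul_left_cancel₀ hc.ne' (by rw [← hk, ← hk, hxv, e])
    exact ⟨Finsupp.ofSupportFinite w hfin, fun y => by
      simp [Finsupp.ofSupportFinite_coe, w, hk y]⟩
  choose e he using hcoord
  have : Infinite K := hinf.to_subtype
  have hadd : ∀ a b, e (a + b) = e a + e b := by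
    refine fun a b => sub_eq_zero.1 (eq_zero_of_forall_eq_none fun x => ?_)
    have := he (a + b) x
    rw [map_add, LinearMap.add_apply, he a x, he b x, ← mul_add] at this
    have := mul_left_cancel₀ hc.ne' this
    simp only [Finsupp.sub_apply, Finsupp.add_apply]
    linarith
  exact ⟨(AddMonoidHom.mk' e hadd).toIntLinearMap, ⟨he⟩⟩

end IsPosDefRootSystem

/-- The standard integral form on finitely supported vectors, for which the coordinate vectors are
orthonormal. -/
noncomputable def stdForm (ι : Type*) : LinearMap.BilinForm ℤ (ι →₀ ℤ) :=
  Finsupp.linearCombination ℤ Finsupp.lapply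

section stdForm

variable {ι : Type*}

theorem stdForm_apply (v w : ι →₀ ℤ) : stdForm ι v w = v.sum fun i n => n * w i := by
  simp [stdForm, Finsupp.linearCombination_apply, Finsupp.sum, LinearMap.sum_apply]

theorem stdForm_single_right (v : ι →₀ ℤ) (i : ι) : stdForm ι v (Finsupp.single i 1) = v i := by
  classical
  simp [stdForm_apply, Finsupp.single_apply, Finsupp.sum, eq_comm]

theorem stdForm_single_left (i : ι) (v : ι →₀ ℤ) : stdForm ι (Finsupp.single i 1) v = v i := by
  simp [stdForm_apply]

theorem stdForm_symm (v w : ι →₀ ℤ) : stdForm ι v w = stdForm ι w v := by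
  have : stdForm ι = (stdForm ι).flip := by
    ext i j
    classical
    simp [stdForm_single_right, Finsupp.single_apply, eq_comm]
  exact LinearMap.congr_fun₂ this v w

theorem stdForm_self (v : ι →₀ ℤ) : stdForm ι v v = ∑ i ∈ v.support, v i ^ 2 := by
  simp [stdForm_apply, Finsupp.sum, sq]

theorem sq_le_stdForm_self (v : ι →₀ ℤ) (i : ι) : v i ^ 2 ≤ stdForm ι v v := by
  by_cases hi : i ∈ v.support
  · rw [stdForm_self]
    exact Finset.single_le_sum (fun j _ => sq_nonneg (v j)) hi
  · rw [Finsupp.notMem_support_iff.1 hi, stdForm_self]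
    exact (zero_pow two_ne_zero).trans_le (Finset.sum_nonneg fun j _ => sq_nonneg (v j))

theorem exists_eq_single_of_stdForm_self_eq_one {v : ι →₀ ℤ} (hv : stdForm ι v v = 1) :
    ∃ i, v = Finsupp.single i 1 ∨ v = -Finsupp.single i 1 := by
  obtain ⟨i, hi⟩ : ∃ i, v i ≠ 0 := by
    by_contra! hzero
    simp [Finsupp.ext (f := v) (g := 0) hzero] at hv
  have hvi : v i = 1 ∨ v i = -1 := by
    have := sq_le_stdForm_self v i
    have := sq_pos_of_ne_zero hi
    exact sq_eq_one_iff.1 (by omega)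
  have hrest : v - v i • Finsupp.single i 1 = 0 := by
    ext j
    have hj := sq_le_stdForm_self (v - v i • Finsupp.single i 1) j
    simp only [map_sub, map_smul, LinearMap.sub_apply, LinearMap.smul_apply, smul_eq_mul,
      stdForm_single_left, stdForm_single_right, hv, Finsupp.single_eq_same] at hj
    have : v i * v i = 1 := by rcases hvi with e | e <;> simp [e]
    exact pow_eq_zero_iff two_ne_zero |>.1 (le_antisymm (by linarith) (sq_nonneg _))
  refine ⟨i, hvi.imp (fun e => ?_) fun e => ?_⟩ <;> rw [e] at hrest
  · simpa [sub_eq_zero] using hrest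
  · simpa [add_eq_zero_iff_eq_neg] using hrest

end stdForm

theorem eq_one_and_eq_two_mul_of_dvd {c r m t : ℤ} (hc : 0 < c) (hm : m ≠ 0)
    (hdvd : r ∣ 2 * c * m) (hsq : m ^ 2 ≤ t) (hlt : c * t < r) : t = 1 ∧ r = 2 * c := by
  have hm1 : 1 ≤ |m| := Int.one_le_abs hm
  rw [← sq_abs] at hsq
  have hr_le : r ≤ 2 * c * |m| := Int.le_of_dvd (by positivity) <| by
    rwa [← abs_of_pos (by positivity : 0 < 2 * c), ← abs_mul, dvd_abs]
  have hmt := mul_le_mul_of_nonneg_left hsq hc.le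
  have habs : |m| = 1 := by
    have : |m| < 2 := lt_of_mul_lt_mul_left (by linarith) (by positivity : 0 ≤ c * |m|)
    omega
  rw [habs, mul_one] at hr_le
  rw [habs, one_pow] at hsq hmt
  have ht : t = 1 := by
    have : t < 2 := lt_of_mul_lt_mul_left (by linarith) hc.le
    omega
  have hdvd_two : r ∣ 2 * c := by
    rcases eq_or_eq_neg_of_abs_eq habs with rfl | rfl
    · simpa using hdvd
    · simpa using hdvd
  refine ⟨ht, hr_le.eq_of_not_lt fun hr_lt => ?_⟩
  have := Int.le_of_dvd (sub_pos.2 hr_lt) (hdvd_two.sub (dvd_refl r))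
  linarith

theorem IsClique.apply_sum_self {L : Type*} [AddCommGroup L] {B : LinearMap.BilinForm ℤ L}
    {C : Set L} {c : ℤ} {K : Set L} (hK : IsClique B C c K) {Y : Finset L} (hY : ↑Y ⊆ K) :
    B (∑ y ∈ Y, y) (∑ y ∈ Y, y) = Y.card * ((Y.card + 1) * c) := by
  classical
  have hxY : ∀ x ∈ Y, B x (∑ y ∈ Y, y) = (Y.card + 1) * c := by
    intro x hx
    rw [map_sum, ← Finset.add_sum_erase Y _ hx, hK.norm x (hY hx),
      Finset.sum_congr rfl fun y hy => hK.pairwise (hY hx)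
        (hY (Finset.mem_of_mem_erase hy)) (Finset.ne_of_mem_erase hy).symm,
      Finset.sum_const, nsmul_eq_mul, ← Finset.card_erase_add_one hx]
    push_cast
    ring
  rw [LinearMap.map_sum₂, Finset.sum_congr rfl hxY, Finset.sum_const, nsmul_eq_mul]

namespace IsPosDefRootSystem

variable {L : Type*} [AddCommGroup L] {B : LinearMap.BilinForm ℤ L} {C : Set L} {c : ℤ} {K : Set L}
  {e : L →ₗ[ℤ] Option K →₀ ℤ}

theorem cliqueCoord_coe (h : IsPosDefRootSystem B C) (hK : IsClique B C c K) (hinf : K.Infinite)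
    (he : IsCliqueCoord B c K e) (x : K) :
    e x = Finsupp.single none 1 - Finsupp.single (some x) 1 := by
  have : Infinite K := hinf.to_subtype
  have hc := h.pos_of_clique hK hinf.nonempty
  refine sub_eq_zero.1 (eq_zero_of_forall_eq_none fun y => ?_)
  have hxy := he.apply_eq x y
  rcases eq_or_ne x y with rfl | hne
  · rw [hK.norm x x.2, mul_comm] at hxy
    have := mul_left_cancel₀ hc.ne' hxy
    suffices e x none - 1 = e x (some x) + 1 by simpa
    omega
  · rw [hK.pairwise x.2 y.2 (Subtype.coe_ne_coe.2 hne)] at hxy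
    have := mul_left_cancel₀ hc.ne' ((mul_one c).trans hxy)
    suffices e x none - 1 = e x (some y) by simpa [hne]
    omega

theorem exists_mem_span_cliqueCoord_eq (h : IsPosDefRootSystem B C) (hK : IsClique B C c K)
    (hinf : K.Infinite) (he : IsCliqueCoord B c K e) (w : Option K →₀ ℤ) :
    ∃ k ∈ Submodule.span ℤ K, e k = w - w.degree • Finsupp.single none 1 := by
  induction w using Finsupp.induction_linear with
  | zero => exact ⟨0, zero_mem _, by simp⟩
  | add v w hv hw =>
    obtain ⟨k, hk, ek⟩ := hv
    obtain ⟨l, hl, el⟩ := hw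
    refine ⟨k + l, add_mem hk hl, ?_⟩
    rw [map_add, ek, el, map_add, add_smul]
    abel
  | single i n =>
    rcases i with _ | x
    · exact ⟨0, zero_mem _, by simp⟩
    · refine ⟨-n • (x : L), Submodule.smul_mem _ _ (Submodule.subset_span x.2), ?_⟩
      rw [map_smul, h.cliqueCoord_coe hK hinf he, Finsupp.degree_single, smul_sub, neg_smul,
        neg_smul]
      simp [add_comm, sub_eq_add_neg]

theorem apply_eq_stdForm_of_mem_span (h : IsPosDefRootSystem B C) (hK : IsClique B C c K)
    (hinf : K.Infinite) (he : IsCliqueCoord B c K e) (a : L) {k : L}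
    (hk : k ∈ Submodule.span ℤ K) : B a k = c * stdForm _ (e a) (e k) := by
  induction hk using Submodule.span_induction with
  | mem x hx =>
    have hex := h.cliqueCoord_coe hK hinf he ⟨x, hx⟩
    simp only at hex
    rw [he.apply_eq a ⟨x, hx⟩, hex, map_sub, stdForm_single_right, stdForm_single_right]
  | zero => simp
  | add k l _ _ ihk ihl => simp only [map_add, ihk, ihl, mul_add]
  | smul n k _ ihk => simp only [map_smul, ihk, smul_eq_mul]; ring

/-- Subtracting from `N • u` a multiple of the sum of `N` elements of the clique, and letting `N`
grow, shows that `u` is at least as long as its component along `ε₀`. -/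
theorem mul_sq_le_of_cliqueCoord_eq (h : IsPosDefRootSystem B C) (hK : IsClique B C c K)
    (hinf : K.Infinite) (he : IsCliqueCoord B c K e) {u : L} {s : ℤ}
    (hu : e u = s • Finsupp.single none 1) : c * s ^ 2 ≤ B u u := by
  have hc := h.pos_of_clique hK hinf.nonempty
  have hux : ∀ x ∈ K, B u x = c * s := fun x hx => by
    simp [he.apply_eq u ⟨x, hx⟩, hu]
  have hineq : ∀ N : ℕ, 0 ≤ N ^ 2 * (B u u - c * s ^ 2) + N * (s ^ 2 * c) := by
    intro N
    obtain ⟨Y, hYK, hY⟩ := hinf.exists_subset_card_eq N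
    have huY : B u (∑ y ∈ Y, y) = N * (c * s) := by
      rw [map_sum, Finset.sum_congr rfl fun y hy => hux y (hYK hy)]
      simp [hY]
    have hYY := hK.apply_sum_self hYK
    rw [hY] at hYY
    have := h.nonneg ((N : ℤ) • u - s • ∑ y ∈ Y, y)
    simp only [map_sub, map_smul, LinearMap.sub_apply, LinearMap.smul_apply, smul_eq_mul, hYY,
      h.symm _ u, huY] at this
    linarith
  by_contra! hlt
  obtain ⟨N, hN⟩ := exists_nat_gt (s ^ 2 * c)
  have hN0 : (0 : ℤ) < N := lt_of_le_of_lt (mul_nonneg (sq_nonneg s) hc.le) hN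
  nlinarith [hineq N, mul_lt_mul_of_pos_left hN hN0, mul_pos hN0 hN0]

theorem mul_stdForm_self_le (h : IsPosDefRootSystem B C) (hK : IsClique B C c K)
    (hinf : K.Infinite) (he : IsCliqueCoord B c K e) (a : L) :
    c * stdForm _ (e a) (e a) ≤ B a a := by
  obtain ⟨k, hk, hek⟩ := h.exists_mem_span_cliqueCoord_eq hK hinf he (e a)
  have hle := h.mul_sq_le_of_cliqueCoord_eq hK hinf he (u := a - k) (s := (e a).degree) (by
    rw [map_sub, hek, sub_sub_cancel])
  have hak := h.apply_eq_stdForm_of_mem_span hK hinf he a hk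
  have hkk := h.apply_eq_stdForm_of_mem_span hK hinf he k hk
  have hself : stdForm _ (e a - e k) (e a - e k) = (e a).degree ^ 2 := by
    rw [hek, sub_sub_cancel]
    simp only [map_smul, LinearMap.smul_apply, stdForm_single_right, Finsupp.single_eq_same,
      smul_eq_mul, mul_one, sq]
  simp only [map_sub, LinearMap.sub_apply, h.symm k a, hak, hkk, stdForm_symm (e k) (e a)]
    at hle hself
  rw [← hself] at hle
  linarith

theorem apply_eq_stdForm_of_self (h : IsPosDefRootSystem B C) (hK : IsClique B C c K)
    (hinf : K.Infinite) (he : IsCliqueCoord B c K e) {a : L}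
    (ha : B a a = c * stdForm _ (e a) (e a)) (b : L) : B a b = c * stdForm _ (e a) (e b) := by
  let D : LinearMap.BilinForm ℤ L := B - c • (stdForm (Option K)).compl₁₂ e e
  have hD : ∀ x y, D x y = B x y - c * stdForm _ (e x) (e y) := fun _ _ => rfl
  have hcs := LinearMap.BilinForm.apply_sq_le_of_symm D
    (fun x => sub_nonneg.2 (h.mul_stdForm_self_le hK hinf he x))
    ⟨fun x y => by simp only [hD, RingHom.id_apply, h.symm x y, stdForm_symm (e x)]⟩ a b
  rw [hD a a, ha, sub_self, zero_mul] at hcs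
  exact sub_eq_zero.1 (pow_eq_zero_iff two_ne_zero |>.1 (le_antisymm hcs (sq_nonneg _)))

theorem self_dvd_cliqueCoord (h : IsPosDefRootSystem B C) (hK : IsClique B C c K)
    (hinf : K.Infinite) (he : IsCliqueCoord B c K e) {α : L} (hα : α ∈ C) (i : Option K) :
    B α α ∣ 2 * c * e α i := by
  have hdvd : ∀ x : K, B α α ∣ 2 * c * (e α none - e α (some x)) := fun x => by
    obtain ⟨k, hk⟩ := h.integral α hα x (hK.subset x.2)
    exact ⟨k, by rw [mul_assoc, ← he.apply_eq, hk, mul_comm]⟩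
  have hnone : B α α ∣ 2 * c * e α none := by
    have : Infinite K := hinf.to_subtype
    obtain ⟨x, hx⟩ := Infinite.exists_notMem_finset ((e α).support.preimage some
      (Option.some_injective K).injOn)
    simpa [show e α (some x) = 0 by simpa using hx] using hdvd x
  rcases i with _ | x
  · exact hnone
  · simpa [mul_sub] using dvd_sub hnone (hdvd x)

theorem not_maximal_clique_of_cliqueCoord_eq (h : IsPosDefRootSystem B C)
    (hK : IsClique B C c K) (hinf : K.Infinite) (he : IsCliqueCoord B c K e) {α : L} (hα : α ∈ C)
    (hnorm : B α α = 2 * c) (heα : e α = Finsupp.single none 1) :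
    ¬ Maximal (IsClique B C c) K := by
  intro hmax
  have hαx : ∀ x ∈ K, B α x = c := fun x hx => by simp [he.apply_eq α ⟨x, hx⟩, heα]
  have hclique : IsClique B C c (insert α K) := by
    refine ⟨Set.insert_subset hα hK.subset, ?_, ?_⟩
    · rintro x (rfl | hx)
      exacts [hnorm, hK.norm x hx]
    · exact hK.pairwise.insert fun x hx _ => ⟨hαx x hx, (h.symm x α).trans (hαx x hx)⟩
  have hαK : α ∈ K := hmax.le_of_ge hclique (Set.subset_insert α K) (Set.mem_insert α K)
  have := hαx α hαK
  linarith [h.pos_of_clique hK hinf.nonempty]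

theorem not_maximal_clique_of_stdForm_eq_one (h : IsPosDefRootSystem B C)
    (hK : IsClique B C c K) (hinf : K.Infinite) (he : IsCliqueCoord B c K e) {α : L} (hα : α ∈ C)
    (hnorm : B α α = 2 * c) (heα : stdForm _ (e α) (e α) = 1) :
    ¬ Maximal (IsClique B C c) K := by
  obtain ⟨β, hβ, hβnorm, i, hi⟩ : ∃ β ∈ C, B β β = 2 * c ∧ ∃ i, e β = Finsupp.single i 1 := by
    obtain ⟨i, hi | hi⟩ := exists_eq_single_of_stdForm_self_eq_one heα
    · exact ⟨α, hα, hnorm, i, hi⟩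
    · exact ⟨-α, h.neg_mem hα, by simpa using hnorm, i, by rw [map_neg, hi, neg_neg]⟩
  rcases i with _ | x
  · exact h.not_maximal_clique_of_cliqueCoord_eq hK hinf he hβ hβnorm hi
  · have hβx : B β x = -c := by simp [he.apply_eq β x, hi]
    have hxx := hK.norm x x.2
    have hmem : β + x ∈ C := by
      simpa using h.reflection_mem x (hK.subset x.2) β hβ (-1)
        (by rw [h.symm, hβx, hxx]; ring)
    refine h.not_maximal_clique_of_cliqueCoord_eq hK hinf he hmem ?_ ?_
    · simp only [map_add, LinearMap.add_apply, hβnorm, hβx, hxx, h.symm x β]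
      ring
    · rw [map_add, hi, h.cliqueCoord_coe hK hinf he, add_sub_cancel]

theorem self_eq_of_cliqueCoord_ne_zero (h : IsPosDefRootSystem B C)
    (hK : Maximal (IsClique B C c) K) (hinf : K.Infinite) (he : IsCliqueCoord B c K e) {α : L}
    (hα : α ∈ C) (heα : e α ≠ 0) : B α α = c * stdForm _ (e α) (e α) := by
  by_contra hne
  have hlt := lt_of_le_of_ne (h.mul_stdForm_self_le hK.prop hinf he α) (Ne.symm hne)
  obtain ⟨i, hi⟩ := Finsupp.ne_iff.1 heα
  obtain ⟨hstd, hnorm⟩ := eq_one_and_eq_two_mul_of_dvd (h.pos_of_clique hK.prop hinf.nonempty) hi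
    (h.self_dvd_cliqueCoord hK.prop hinf he hα i) (sq_le_stdForm_self (e α) i) hlt
  exact h.not_maximal_clique_of_stdForm_eq_one hK.prop hinf he hα hnorm hstd hK

theorem apply_eq_stdForm (h : IsPosDefRootSystem B C) (hK : Maximal (IsClique B C c) K)
    (hinf : K.Infinite) (he : IsCliqueCoord B c K e) (a b : L) :
    B a b = c * stdForm _ (e a) (e b) := by
  have hne : ∀ α ∈ C, ∀ b, e α ≠ 0 → B α b = c * stdForm _ (e α) (e b) := fun α hα b heα =>
    h.apply_eq_stdForm_of_self hK.prop hinf he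
      (h.self_eq_of_cliqueCoord_ne_zero hK hinf he hα heα) b
  have hroot : ∀ β ∈ C, e β ≠ 0 := by
    intro β hβ heβ
    obtain ⟨x, hx⟩ := hinf.nonempty
    obtain ⟨δ, hδ, hxδ, hδβ⟩ := h.exists_common_neighbor x (hK.prop.subset hx) β hβ
    have heδ : e δ ≠ 0 := fun heδ => hxδ <| by
      rw [h.symm, he.apply_eq δ ⟨x, hx⟩, heδ]
      simp
    exact hδβ (by rw [hne δ hδ β heδ, heβ, map_zero, mul_zero])
  have ha : a ∈ Submodule.span ℤ C := h.span_eq_top ▸ Submodule.mem_top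
  induction ha using Submodule.span_induction with
  | mem α hα => exact hne α hα b (hroot α hα)
  | zero => simp
  | add a a' _ _ iha iha' => simp only [map_add, LinearMap.add_apply, iha, iha', mul_add]
  | smul n a _ iha =>
    simp only [map_smul, LinearMap.smul_apply, iha, smul_eq_mul]
    ring

theorem mem_span_clique_of_degree_eq_zero (h : IsPosDefRootSystem B C)
    (hK : Maximal (IsClique B C c) K) (hinf : K.Infinite) (he : IsCliqueCoord B c K e) {a : L}
    (ha : (e a).degree = 0) : a ∈ Submodule.span ℤ K := by
  obtain ⟨k, hk, hek⟩ := h.exists_mem_span_cliqueCoord_eq hK.prop hinf he (e a)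
  rw [ha, zero_smul, sub_zero] at hek
  have hzero : B (a - k) (a - k) = 0 := by
    rw [h.apply_eq_stdForm hK hinf he, map_sub, hek, sub_self, map_zero, mul_zero]
  have hak : a - k = 0 := by_contra fun hne => (h.pos _ hne).ne' hzero
  rwa [sub_eq_zero.1 hak]

theorem abs_degree_cliqueCoord_le_two (h : IsPosDefRootSystem B C)
    (hK : Maximal (IsClique B C c) K) (hinf : K.Infinite) (he : IsCliqueCoord B c K e) {β : L}
    (hβ : β ∈ C) : |(e β).degree| ≤ 2 := by
  have hc := h.pos_of_clique hK.prop hinf.nonempty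
  set s := stdForm _ (e β) (e β) with hs_def
  have hββ : B β β = c * s := h.apply_eq_stdForm hK hinf he β β
  have hs : 0 < s := pos_of_mul_pos_right (hββ ▸ h.pos_of_mem hβ) hc.le
  have hterm : ∀ i, s * |e β i| ≤ 2 * e β i ^ 2 := by
    intro i
    obtain ⟨k, hk⟩ := h.self_dvd_cliqueCoord hK.prop hinf he hβ i
    have hk : s * k = 2 * e β i := mul_left_cancel₀ hc.ne' (by rw [hββ] at hk; linarith)
    have habs : s * |k| = 2 * |e β i| := by
      rw [← abs_of_pos hs, ← abs_mul, hk, abs_mul, abs_two]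
    rcases eq_or_ne k 0 with rfl | hk0
    · rw [show |e β i| = 0 by simpa using habs.symm, mul_zero]
      exact mul_nonneg zero_le_two (sq_nonneg _)
    · have := Int.one_le_abs hk0
      rw [← sq_abs]
      nlinarith [abs_nonneg (e β i)]
  have hsum : s * ∑ i ∈ (e β).support, |e β i| ≤ 2 * s := by
    rw [hs_def, stdForm_self, Finset.mul_sum, Finset.mul_sum, ← stdForm_self]
    exact Finset.sum_le_sum fun i _ => hterm i
  rw [Finsupp.degree_apply]
  exact (Finset.abs_sum_le_sum_abs _ _).trans (by nlinarith)

/-- Degrees of roots lie in `{0, ±1, ±2}`. -/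
theorem exists_degree_cliqueCoord_dvd (h : IsPosDefRootSystem B C)
    (hK : Maximal (IsClique B C c) K) (hinf : K.Infinite) (he : IsCliqueCoord B c K e) {α : L}
    (hα : α ∈ C) (hα0 : (e α).degree ≠ 0) :
    ∃ β ∈ C, (e β).degree ≠ 0 ∧ ∀ a, (e β).degree ∣ (e a).degree := by
  obtain ⟨β, hβ, hβ0, hdvd⟩ :
      ∃ β ∈ C, (e β).degree ≠ 0 ∧ ∀ γ ∈ C, (e β).degree ∣ (e γ).degree := by
    by_cases hone : ∃ β ∈ C, |(e β).degree| = 1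
    · obtain ⟨β, hβ, h1⟩ := hone
      exact ⟨β, hβ, fun h0 => by simp [h0] at h1, fun γ _ => ((abs_dvd _ _).1 (h1 ▸ one_dvd _))⟩
    · push Not at hone
      have htwo : ∀ γ ∈ C, (e γ).degree ≠ 0 → |(e γ).degree| = 2 := fun γ hγ hγ0 => by
        have := h.abs_degree_cliqueCoord_le_two hK hinf he hγ
        have := hone γ hγ
        have := Int.one_le_abs hγ0
        omega
      refine ⟨α, hα, hα0, fun γ hγ => ?_⟩
      rcases eq_or_ne (e γ).degree 0 with hγ0 | hγ0
      · exact hγ0 ▸ dvd_zero _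
      · rw [← abs_dvd_abs, htwo α hα hα0, htwo γ hγ hγ0]
  refine ⟨β, hβ, hβ0, fun a => ?_⟩
  have ha : a ∈ Submodule.span ℤ C := h.span_eq_top ▸ Submodule.mem_top
  induction ha using Submodule.span_induction with
  | mem γ hγ => exact hdvd γ hγ
  | zero => simp
  | add a b _ _ iha ihb => simpa using dvd_add iha ihb
  | smul n a _ iha => simpa using iha.mul_left n

theorem linearIndepOn_clique (h : IsPosDefRootSystem B C) (hK : IsClique B C c K)
    (hinf : K.Infinite) (he : IsCliqueCoord B c K e) : LinearIndepOn ℤ id K := by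
  refine LinearIndependent.of_pairwise_dual_eq_zero_one _
    (fun x => -Finsupp.lapply (some x) ∘ₗ e) (fun x y hxy => ?_) fun x => ?_
  · simp [h.cliqueCoord_coe hK hinf he, hxy.symm]
  · simp [h.cliqueCoord_coe hK hinf he]

/-- A maximal clique spans the vectors of degree zero, so a root of minimal nonzero degree, if there
is one, completes it to a base. -/
theorem exists_base_of_infinite (h : IsPosDefRootSystem B C) (hC : C.Infinite) :
    ∃ P ⊆ C, LinearIndepOn ℤ id P ∧ Submodule.span ℤ P = ⊤ := by
  obtain ⟨c, K₀, hK₀, hinf₀⟩ := h.exists_infinite_clique hC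
  obtain ⟨K, hK₀K, hK⟩ := hK₀.exists_maximal
  have hinf := hinf₀.mono hK₀K
  obtain ⟨e, he⟩ := h.exists_isCliqueCoord hK.prop hinf
  have hindep := h.linearIndepOn_clique hK.prop hinf he
  have hzero : ∀ k ∈ Submodule.span ℤ K, (e k).degree = 0 := by
    have : Submodule.span ℤ K ≤ LinearMap.ker
        (Finsupp.degree.toIntLinearMap ∘ₗ e : L →ₗ[ℤ] ℤ) :=
      Submodule.span_le.2 fun x hx => by simp [h.cliqueCoord_coe hK.prop hinf he ⟨x, hx⟩]
    exact fun k hk => this hk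
  by_cases hdeg : ∀ β ∈ C, (e β).degree = 0
  · refine ⟨K, hK.prop.subset, hindep, eq_top_iff.2 ?_⟩
    rw [← h.span_eq_top]
    exact Submodule.span_le.2 fun β hβ => h.mem_span_clique_of_degree_eq_zero hK hinf he (hdeg β hβ)
  · push Not at hdeg
    obtain ⟨α, hα, hα0⟩ := hdeg
    obtain ⟨β, hβ, hβ0, hdvd⟩ := h.exists_degree_cliqueCoord_dvd hK hinf he hα hα0
    refine ⟨insert β K, Set.insert_subset hβ hK.prop.subset, hindep.id_insert' fun n hn => ?_,
      eq_top_iff.2 fun a _ => ?_⟩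
    · have := hzero _ hn
      rw [map_smul, map_zsmul, smul_eq_zero] at this
      exact this.resolve_right hβ0
    · obtain ⟨n, hn⟩ := hdvd a
      have ha : a - n • β ∈ Submodule.span ℤ K :=
        h.mem_span_clique_of_degree_eq_zero hK hinf he (by simp [hn, mul_comm])
      rw [Submodule.mem_span_insert]
      exact ⟨n, a - n • β, ha, by abel⟩

theorem exists_base (h : IsPosDefRootSystem B C) :
    ∃ P ⊆ C, LinearIndepOn ℤ id P ∧ Submodule.span ℤ P = ⊤ :=
  C.finite_or_infinite.elim h.exists_base_of_finite h.exists_base_of_infinite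

end IsPosDefRootSystem

/-! ### Real roots and their components -/

/-- The nonzero real roots of `R`. -/
def realRoots {F : Type*} [Field F] {A : Type*} [AddCommGroup A]
    (b : A →ₗ[ℤ] A →ₗ[ℤ] F) (R : Set A) : Set A :=
  {α | α ∈ R ∧ b α α ≠ 0}

open Classical in
/-- The coroot `x ↦ 2 (γ, x) / (γ, γ)` of `γ`, as an integral functional. It is `0` when these
quotients are not all integral. -/
noncomputable def coroot {F : Type*} [Field F] {A : Type*} [AddCommGroup A]
    (b : A →ₗ[ℤ] A →ₗ[ℤ] F) (γ : A) : A →ₗ[ℤ] ℤ :=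
  if h : ∃ f : A →ₗ[ℤ] ℤ, ∀ x, 2 * b γ x = (f x : F) * b γ γ then h.choose else 0

namespace IsLFRSS

variable {F : Type*} [Field F] [CharZero F] {A : Type*} [AddCommGroup A]
  {b : A →ₗ[ℤ] A →ₗ[ℤ] F} {R : Set A}

theorem form_symm (h : IsLFRSS (fun x y => b x y) R) (x y : A) : b x y = b y x :=
  h.1.symm x y

theorem span_eq_top (h : IsLFRSS (fun x y => b x y) R) : Submodule.span ℤ R = ⊤ :=
  Submodule.toAddSubgroup_injective <| by
    rw [Submodule.span_int_eq_addSubgroupClosure, h.1.closure_eq_top]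
    rfl

theorem coroot_spec (h : IsLFRSS (fun x y => b x y) R) {γ : A} (hγ : γ ∈ realRoots b R) (x : A) :
    2 * b γ x = (coroot b γ x : F) * b γ γ := by
  have hquot : ∀ x : A, ∃ k : ℤ, 2 * b γ x = (k : F) * b γ γ := by
    intro x
    have hx : x ∈ Submodule.span ℤ R := h.span_eq_top ▸ Submodule.mem_top
    induction hx using Submodule.span_induction with
    | mem x hx => exact h.1.cartan γ hγ.1 hγ.2 x hx
    | zero => exact ⟨0, by simp⟩
    | add x y _ _ hx hy =>
      obtain ⟨k, hk⟩ := hx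
      obtain ⟨l, hl⟩ := hy
      exact ⟨k + l, by rw [map_add, mul_add, hk, hl, Int.cast_add, add_mul]⟩
    | smul n x _ hx =>
      obtain ⟨k, hk⟩ := hx
      exact ⟨n * k, by rw [map_smul, zsmul_eq_mul, mul_left_comm, hk, Int.cast_mul, mul_assoc]⟩
  choose f hf using hquot
  have hadd : ∀ x y, f (x + y) = f x + f y := fun x y => by
    have : (f (x + y) : F) * b γ γ = ((f x + f y : ℤ) : F) * b γ γ := by
      rw [← hf, map_add, mul_add, hf, hf, Int.cast_add, add_mul]
    exact_mod_cast mul_right_cancel₀ hγ.2 this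
  have hex : ∃ f : A →ₗ[ℤ] ℤ, ∀ x, 2 * b γ x = (f x : F) * b γ γ :=
    ⟨(AddMonoidHom.mk' f hadd).toIntLinearMap, hf⟩
  rw [coroot, dif_pos hex]
  exact hex.choose_spec x

theorem coroot_eq_of_eq (h : IsLFRSS (fun x y => b x y) R) {γ : A} (hγ : γ ∈ realRoots b R) {x : A}
    {k : ℤ} (hk : 2 * b γ x = (k : F) * b γ γ) : coroot b γ x = k := by
  rw [h.coroot_spec hγ] at hk
  exact_mod_cast mul_right_cancel₀ hγ.2 hk

theorem coroot_self (h : IsLFRSS (fun x y => b x y) R) {γ : A} (hγ : γ ∈ realRoots b R) :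
    coroot b γ γ = 2 :=
  h.coroot_eq_of_eq hγ (by norm_num)

theorem coroot_eq_zero (h : IsLFRSS (fun x y => b x y) R) {γ : A} (hγ : γ ∈ realRoots b R) {x : A} :
    coroot b γ x = 0 ↔ b γ x = 0 := by
  have hspec := h.coroot_spec hγ x
  constructor <;> intro h0 <;> simpa [h0, hγ.2] using hspec

theorem coroot_mul_self_comm (h : IsLFRSS (fun x y => b x y) R) {α β : A} (hα : α ∈ realRoots b R)
    (hβ : β ∈ realRoots b R) : (coroot b α β : F) * b α α = coroot b β α * b β β := by
  rw [← h.coroot_spec hα, ← h.coroot_spec hβ, h.form_symm]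

theorem coroot_comm_of_self_eq (h : IsLFRSS (fun x y => b x y) R) {α β : A}
    (hα : α ∈ realRoots b R) (hβ : β ∈ realRoots b R) (heq : b β β = b α α) :
    coroot b α β = coroot b β α := by
  have := h.coroot_mul_self_comm hα hβ
  rw [heq] at this
  exact_mod_cast mul_right_cancel₀ hα.2 this

theorem neg_mem_realRoots (h : IsLFRSS (fun x y => b x y) R) {γ : A} (hγ : γ ∈ realRoots b R) :
    -γ ∈ realRoots b R :=
  ⟨h.1.neg_mem γ hγ.1, by simpa using hγ.2⟩

theorem coroot_neg (h : IsLFRSS (fun x y => b x y) R) {γ : A} (hγ : γ ∈ realRoots b R) (x : A) :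
    coroot b (-γ) x = -coroot b γ x := by
  refine h.coroot_eq_of_eq (h.neg_mem_realRoots hγ) ?_
  simp only [map_neg, LinearMap.neg_apply, neg_neg, mul_neg, h.coroot_spec hγ x, Int.cast_neg,
    neg_mul]

theorem exists_string (h : IsLFRSS (fun x y => b x y) R) {γ β : A} (hγ : γ ∈ realRoots b R)
    (hβ : β ∈ R) : ∃ p q : ℕ, coroot b γ β = p - q ∧
      ∀ k : ℤ, β + k • γ ∈ R ↔ -(p : ℤ) ≤ k ∧ k ≤ q := by
  obtain ⟨p, q, hpq, hmem⟩ := h.1.string γ hγ.1 hγ.2 β hβ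
  refine ⟨p, q, h.coroot_eq_of_eq hγ ?_, hmem⟩
  rw [h.form_symm, hpq]
  push_cast
  rfl

theorem sub_smul_mem (h : IsLFRSS (fun x y => b x y) R) {γ β : A} (hγ : γ ∈ realRoots b R)
    (hβ : β ∈ R) {j : ℤ} (h0 : 0 ≤ j) (hj : j ≤ coroot b γ β) : β - j • γ ∈ R := by
  obtain ⟨p, q, hpq, hmem⟩ := h.exists_string hγ hβ
  simpa [sub_eq_add_neg] using (hmem (-j)).2 ⟨by omega, by omega⟩

theorem sub_mem (h : IsLFRSS (fun x y => b x y) R) {γ β : A} (hγ : γ ∈ realRoots b R)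
    (hβ : β ∈ R) (hpos : 0 < coroot b γ β) : β - γ ∈ R := by
  simpa using h.sub_smul_mem hγ hβ (j := 1) zero_le_one hpos

theorem reflection_mem (h : IsLFRSS (fun x y => b x y) R) {γ β : A} (hγ : γ ∈ realRoots b R)
    (hβ : β ∈ R) : β - coroot b γ β • γ ∈ R := by
  obtain ⟨p, q, hpq, hmem⟩ := h.exists_string hγ hβ
  simpa [sub_eq_add_neg] using (hmem (-coroot b γ β)).2 ⟨by omega, by omega⟩

theorem form_reflection (h : IsLFRSS (fun x y => b x y) R) {γ : A} (hγ : γ ∈ realRoots b R)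
    (x y : A) : b (x - coroot b γ x • γ) (y - coroot b γ y • γ) = b x y := by
  have hx := h.coroot_spec hγ x
  have hy := h.coroot_spec hγ y
  simp only [map_sub, LinearMap.sub_apply, map_smul, LinearMap.smul_apply, zsmul_eq_mul,
    h.form_symm x γ]
  refine mul_left_cancel₀ (two_ne_zero (α := F)) ?_
  linear_combination (-(coroot b γ y : F)) * hx - (coroot b γ x : F) * hy

theorem reflection_mem_realRoots (h : IsLFRSS (fun x y => b x y) R) {γ β : A}
    (hγ : γ ∈ realRoots b R) (hβ : β ∈ realRoots b R) : β - coroot b γ β • γ ∈ realRoots b R :=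
  ⟨h.reflection_mem hγ hβ.1, by rw [h.form_reflection hγ]; exact hβ.2⟩

/-- Otherwise `β - 2 • α` is a real root, and integrality of its coroot at `α` fails. -/
theorem coroot_lt_five_of_self_eq (h : IsLFRSS (fun x y => b x y) R) {α β : A}
    (hα : α ∈ realRoots b R) (hβ : β ∈ realRoots b R) (heq : b β β = b α α) :
    coroot b α β < 5 := by
  by_contra! hge
  have hmem : β - (2 : ℤ) • α ∈ R := h.sub_smul_mem hα hβ.1 (by norm_num) (by omega)
  have hαβ := h.coroot_spec hα β
  set n := coroot b α β
  have hnorm : b (β - (2 : ℤ) • α) (β - (2 : ℤ) • α) = ((5 - 2 * n : ℤ) : F) * b α α := by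
    simp only [map_sub, LinearMap.sub_apply, map_smul, LinearMap.smul_apply, zsmul_eq_mul,
      h.form_symm β α, heq]
    push_cast
    linear_combination (-2) * hαβ
  have hreal : β - (2 : ℤ) • α ∈ realRoots b R :=
    ⟨hmem, hnorm ▸ mul_ne_zero (by exact_mod_cast (by omega : 5 - 2 * n ≠ 0)) hα.2⟩
  have hspec := h.coroot_spec hreal α
  rw [hnorm] at hspec
  set k := coroot b (β - (2 : ℤ) • α) α
  have hk : n - 4 = k * (5 - 2 * n) := by
    have : ((n - 4 : ℤ) : F) * b α α = ((k * (5 - 2 * n) : ℤ) : F) * b α α := by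
      simp only [map_sub, LinearMap.sub_apply, map_smul, LinearMap.smul_apply, zsmul_eq_mul,
        h.form_symm β α] at hspec
      push_cast at hspec ⊢
      linear_combination hspec - hαβ
    exact_mod_cast mul_right_cancel₀ hα.2 this
  rcases lt_trichotomy k 0 with hk0 | hk0 | hk0 <;> nlinarith

/-- For `n = coroot b α β`, the product of `β` with its reflection in `α` is `2 - n ^ 2`, to which
the bound `5` applies as well. -/
theorem abs_coroot_le_two_of_self_eq (h : IsLFRSS (fun x y => b x y) R) {α β : A}
    (hα : α ∈ realRoots b R) (hβ : β ∈ realRoots b R) (heq : b β β = b α α) :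
    |coroot b α β| ≤ 2 := by
  have habs : ∀ α β : A, α ∈ realRoots b R → β ∈ realRoots b R → b β β = b α α →
      |coroot b α β| < 5 := fun α β hα hβ heq => abs_lt.2
    ⟨by
      have := h.coroot_lt_five_of_self_eq (h.neg_mem_realRoots hα) hβ (by simpa using heq)
      rw [h.coroot_neg hα] at this
      omega, h.coroot_lt_five_of_self_eq hα hβ heq⟩
  have hrefl := habs β (β - coroot b α β • α) hβ (h.reflection_mem_realRoots hα hβ)
    (h.form_reflection hα β β)
  rw [map_sub, map_smul, h.coroot_self hβ, ← h.coroot_comm_of_self_eq hα hβ heq, smul_eq_mul,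
    abs_lt] at hrefl
  rw [abs_le]
  constructor <;> nlinarith

theorem coroot_mul_coroot_mem_Icc (h : IsLFRSS (fun x y => b x y) R) {α β : A}
    (hα : α ∈ realRoots b R) (hβ : β ∈ realRoots b R) :
    coroot b α β * coroot b β α ∈ Set.Icc 0 4 := by
  have := h.abs_coroot_le_two_of_self_eq hβ (h.reflection_mem_realRoots hα hβ)
    (h.form_reflection hα β β)
  rw [map_sub, map_smul, h.coroot_self hβ, smul_eq_mul, abs_le] at this
  exact ⟨by omega, by omega⟩

theorem coroot_eq_zero_comm (h : IsLFRSS (fun x y => b x y) R) {α β : A} (hα : α ∈ realRoots b R)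
    (hβ : β ∈ realRoots b R) : coroot b α β = 0 ↔ coroot b β α = 0 := by
  rw [h.coroot_eq_zero hα, h.coroot_eq_zero hβ, h.form_symm]

theorem abs_coroot_le_four (h : IsLFRSS (fun x y => b x y) R) {α β : A} (hα : α ∈ realRoots b R)
    (hβ : β ∈ realRoots b R) : |coroot b α β| ≤ 4 := by
  rcases eq_or_ne (coroot b α β) 0 with h0 | h0
  · simp [h0]
  · have hmul := h.coroot_mul_coroot_mem_Icc hα hβ
    have h1 := Int.one_le_abs fun e => h0 ((h.coroot_eq_zero_comm hα hβ).2 e)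
    calc |coroot b α β| ≤ |coroot b α β| * |coroot b β α| :=
          le_mul_of_one_le_right (abs_nonneg _) h1
      _ = coroot b α β * coroot b β α := by rw [← abs_mul, abs_of_nonneg hmul.1]
      _ ≤ 4 := hmul.2

theorem coroot_pos_comm (h : IsLFRSS (fun x y => b x y) R) {α β : A} (hα : α ∈ realRoots b R)
    (hβ : β ∈ realRoots b R) (hpos : 0 < coroot b α β) : 0 < coroot b β α :=
  lt_of_le_of_ne (nonneg_of_mul_nonneg_right (h.coroot_mul_coroot_mem_Icc hα hβ).1 hpos)
    fun h0 => hpos.ne' ((h.coroot_eq_zero_comm hα hβ).2 h0.symm)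

theorem exists_root_form_ne_zero (h : IsLFRSS (fun x y => b x y) R) {x : A} (hx : x ≠ 0) :
    ∃ η ∈ R, b x η ≠ 0 := by
  by_contra! hc
  refine hx (h.2 x fun c => ?_)
  have hle : Submodule.span ℤ R ≤ LinearMap.ker (b x) := Submodule.span_le.2 hc
  exact hle (h.span_eq_top ▸ Submodule.mem_top)

theorem exists_realRoot_of_isotropic (h : IsLFRSS (fun x y => b x y) R) {δ : A} (hδ : δ ∈ R)
    (hδ0 : δ ≠ 0) (hδδ : b δ δ = 0) : ∃ η ∈ realRoots b R, b δ η ≠ 0 := by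
  obtain ⟨η, hη, hne⟩ := h.exists_root_form_ne_zero hδ0
  by_cases hηη : b η η = 0
  · rcases h.1.ns_string δ hδ hδδ η hη hne with hm | hm
    · refine ⟨η - δ, ⟨hm, ?_⟩, by simpa [hδδ]⟩
      simp [hηη, hδδ, h.form_symm η δ, ← neg_add', ← two_mul, hne]
    · refine ⟨η + δ, ⟨hm, ?_⟩, by simpa [hδδ]⟩
      simp [hηη, hδδ, h.form_symm η δ, ← two_mul, hne]
  · exact ⟨η, ⟨hη, hηη⟩, hne⟩

theorem add_smul_mem_realRoots (h : IsLFRSS (fun x y => b x y) R) {α δ : A}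
    (hα : α ∈ realRoots b R) (hαδ : α - δ ∈ realRoots b R) (hδα : b δ α = 0) (hδδ : b δ δ = 0)
    (k : ℕ) : α + (k : ℤ) • δ ∈ realRoots b R := by
  have hnorm : ∀ k l : ℤ, b (α + k • δ) (α + l • δ) = b α α := fun k l => by
    simp [hδα, hδδ, h.form_symm α δ]
  suffices α + ((k : ℤ) - 1) • δ ∈ realRoots b R ∧ α + (k : ℤ) • δ ∈ realRoots b R from this.2
  induction k with
  | zero => exact ⟨by simpa [← sub_eq_add_neg] using hαδ, by simpa using hα⟩
  | succ k ih =>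
    refine ⟨by simpa using ih.2, ?_⟩
    have hcoroot : coroot b (α + (k : ℤ) • δ) (α + ((k : ℤ) - 1) • δ) = 2 :=
      h.coroot_eq_of_eq ih.2 (by rw [hnorm, hnorm]; norm_num)
    have hrefl := h.neg_mem_realRoots (h.reflection_mem_realRoots ih.2 ih.1)
    rw [hcoroot] at hrefl
    convert hrefl using 1
    push_cast
    module

/-- Otherwise `δ = α - β` is isotropic, all `α + k • δ` are real roots, and their products with a
real root not orthogonal to `δ` are unbounded. -/
theorem eq_of_coroot_eq_two (h : IsLFRSS (fun x y => b x y) R) {α β : A}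
    (hα : α ∈ realRoots b R) (hβ : β ∈ realRoots b R) (heq : b β β = b α α)
    (htwo : coroot b α β = 2) : α = β := by
  by_contra hne
  have hαβ : b α β = b α α := by
    refine mul_left_cancel₀ (two_ne_zero (α := F)) ?_
    rw [h.coroot_spec hα, htwo]
    norm_num
  have hδα : b (α - β) α = 0 := by simp [h.form_symm β α, hαβ]
  have hδδ : b (α - β) (α - β) = 0 := by simp [h.form_symm β α, hαβ, heq]
  have hδ : α - β ∈ R := by
    simpa using h.1.neg_mem _ (h.sub_mem hα hβ.1 (by omega))
  obtain ⟨η, hη, hηδ⟩ := h.exists_realRoot_of_isotropic hδ (sub_ne_zero.2 hne) hδδ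
  have hη0 : coroot b η (α - β) ≠ 0 := fun h0 => hηδ <| by
    rwa [h.coroot_eq_zero hη, h.form_symm] at h0
  have h0 := h.abs_coroot_le_four hη hα
  have h9 := h.abs_coroot_le_four hη
    (h.add_smul_mem_realRoots hα (by simpa using hβ) hδα hδδ 9)
  rw [map_add, map_smul, smul_eq_mul] at h9
  rw [abs_le] at h0 h9
  omega

theorem sub_mem_realRoots (h : IsLFRSS (fun x y => b x y) R) {γ β : A} (hγ : γ ∈ realRoots b R)
    (hβ : β ∈ realRoots b R) (hpos : 0 < coroot b γ β) (hne : β ≠ γ) : β - γ ∈ realRoots b R := by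
  refine ⟨h.sub_mem hγ hβ.1 hpos, fun hzero => ?_⟩
  have hγβ := h.coroot_spec hγ β
  have hβγ := h.coroot_spec hβ γ
  have hb : b γ β ≠ 0 := fun h0 => hpos.ne' ((h.coroot_eq_zero hγ).2 h0)
  simp only [map_sub, LinearMap.sub_apply, h.form_symm β γ] at hzero hβγ
  have htwo : coroot b γ β = 2 ∧ coroot b β γ = 2 := by
    have hmul : ((coroot b γ β + coroot b β γ - coroot b γ β * coroot b β γ : ℤ) : F)
        * (2 * b γ β) = 0 := by
      push_cast
      linear_combination (coroot b β γ : F) * hγβ + (coroot b γ β : F) * hβγ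
        + (coroot b γ β : F) * coroot b β γ * hzero
    have hsum := (mul_eq_zero.1 hmul).resolve_right (mul_ne_zero two_ne_zero hb)
    norm_cast at hsum
    have h2 : (coroot b γ β - 1) * (coroot b β γ - 1) = 1 := by linarith
    rcases Int.eq_one_or_neg_one_of_mul_eq_one' h2 with h2 | h2 <;> omega
  refine hne (h.eq_of_coroot_eq_two hγ hβ ?_ htwo.1).symm
  rw [htwo.1] at hγβ
  rw [htwo.2, hγβ] at hβγ
  exact (mul_left_cancel₀ (by norm_num) hβγ).symm

end IsLFRSS

/-- A union of irreducible components of the real roots: a set of real roots that contains all real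
roots not orthogonal to one of its elements. -/
structure IsComponentUnion {F : Type*} [Field F] {A : Type*} [AddCommGroup A]
    (b : A →ₗ[ℤ] A →ₗ[ℤ] F) (R S : Set A) : Prop where
  subset : S ⊆ realRoots b R
  mem_of_form_ne_zero : ∀ β ∈ S, ∀ δ ∈ realRoots b R, b β δ ≠ 0 → δ ∈ S

/-- The irreducible component of the real root `γ`. Any two roots of a component are joined by a
chain of length two, which allows for this definition without chains. -/
def component {F : Type*} [Field F] {A : Type*} [AddCommGroup A]
    (b : A →ₗ[ℤ] A →ₗ[ℤ] F) (R : Set A) (γ : A) : Set A :=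
  {β | β ∈ realRoots b R ∧ ∃ δ ∈ realRoots b R, b β δ ≠ 0 ∧ b δ γ ≠ 0}

section

variable {F : Type*} [Field F] {A : Type*} [AddCommGroup A]
  {b : A →ₗ[ℤ] A →ₗ[ℤ] F} {R : Set A}

theorem component_subset_realRoots {γ : A} : component b R γ ⊆ realRoots b R := fun _ hβ => hβ.1

theorem mem_component_self {γ : A} (hγ : γ ∈ realRoots b R) : γ ∈ component b R γ :=
  ⟨hγ, γ, hγ, hγ.2, hγ.2⟩

theorem isComponentUnion_realRoots : IsComponentUnion b R (realRoots b R) :=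
  ⟨subset_rfl, fun _ _ _ hδ _ => hδ⟩

theorem IsComponentUnion.union {S T : Set A} (hS : IsComponentUnion b R S)
    (hT : IsComponentUnion b R T) : IsComponentUnion b R (S ∪ T) where
  subset := Set.union_subset hS.subset hT.subset
  mem_of_form_ne_zero _ hβ δ hδ hne :=
    hβ.imp (fun hβ => hS.mem_of_form_ne_zero _ hβ δ hδ hne)
      (fun hβ => hT.mem_of_form_ne_zero _ hβ δ hδ hne)

theorem IsComponentUnion.span_realRoots_eq_sup {S : Set A} (hS : IsComponentUnion b R S) :
    Submodule.span ℤ (realRoots b R) =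
      Submodule.span ℤ S ⊔ Submodule.span ℤ (realRoots b R \ S) := by
  rw [← Submodule.span_union, Set.union_sdiff_cancel hS.subset]

end

namespace IsLFRSS

variable {F : Type*} [Field F] [CharZero F] {A : Type*} [AddCommGroup A]
  {b : A →ₗ[ℤ] A →ₗ[ℤ] F} {R S : Set A}

theorem neg_mem_of_isComponentUnion (h : IsLFRSS (fun x y => b x y) R)
    (hS : IsComponentUnion b R S) {β : A} (hβ : β ∈ S) : -β ∈ S :=
  hS.mem_of_form_ne_zero β hβ (-β) (h.neg_mem_realRoots (hS.subset hβ))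
    (by simpa using (hS.subset hβ).2)

theorem add_mem_of_isComponentUnion (h : IsLFRSS (fun x y => b x y) R)
    (hS : IsComponentUnion b R S) {β δ : A} (hβ : β ∈ S) (hδ : δ ∈ S) (hneg : coroot b β δ < 0)
    (hne : β + δ ≠ 0) : β + δ ∈ S := by
  have hmem : β + δ ∈ realRoots b R := by
    have := h.sub_mem_realRoots (h.neg_mem_realRoots (hS.subset hβ)) (hS.subset hδ)
      (by rw [h.coroot_neg (hS.subset hβ)]; omega) fun e => hne (by rw [e, add_neg_cancel])
    rwa [sub_neg_eq_add, add_comm] at this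
  by_cases hβδ : b β (β + δ) = 0
  · refine hS.mem_of_form_ne_zero δ hδ _ hmem fun h0 => hmem.2 ?_
    rw [map_add b, LinearMap.add_apply, hβδ, h0, add_zero]
  · exact hS.mem_of_form_ne_zero β hβ _ hmem hβδ

theorem exists_multiset_two_le_coroot_sum (h : IsLFRSS (fun x y => b x y) R)
    (hS : IsComponentUnion b R S) (s : Multiset A) (hs : ∀ β ∈ s, β ∈ S) :
    ∃ t : Multiset A, t.sum = s.sum ∧ ∀ β ∈ t, β ∈ S ∧ 2 ≤ coroot b β s.sum := by
  induction hn : s.card using Nat.strong_induction_on generalizing s with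
  | _ n ih =>
  by_cases hall : ∀ β ∈ s, 2 ≤ coroot b β s.sum
  · exact ⟨s, rfl, fun β hβ => ⟨hs β hβ, hall β hβ⟩⟩
  push Not at hall
  obtain ⟨β, hβ, hβs⟩ := hall
  have hβS := hs β hβ
  obtain ⟨t, rfl⟩ := Multiset.exists_cons_of_mem hβ
  obtain ⟨δ, hδ, hδneg⟩ : ∃ δ ∈ t, coroot b β δ < 0 := by
    by_contra! hc
    rw [Multiset.sum_cons, map_add, h.coroot_self (hS.subset hβS), map_multiset_sum] at hβs
    have := Multiset.sum_nonneg (s := t.map (coroot b β)) (by simpa using hc)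
    omega
  obtain ⟨u, rfl⟩ := Multiset.exists_cons_of_mem hδ
  have hδS := hs δ (by simp)
  have hu : ∀ ε ∈ u, ε ∈ S := fun ε hε => hs ε (by simp [hε])
  simp only [Multiset.card_cons] at hn
  simp only [Multiset.sum_cons, ← add_assoc]
  by_cases h0 : β + δ = 0
  · rw [h0, zero_add]
    exact ih _ (by omega) u hu rfl
  · have hadd := h.add_mem_of_isComponentUnion hS hβS hδS hδneg h0
    simpa using ih _ (by rw [Multiset.card_cons]; omega) ((β + δ) ::ₘ u)
      (by simpa [hadd] using hu) rfl

/-- A representation of `x` as a sum of as few elements of `S` as possible will do: the sum of two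
of its terms is not a root, so they have nonnegative coroots at each other. -/
theorem exists_multiset_two_le_coroot (h : IsLFRSS (fun x y => b x y) R)
    (hS : IsComponentUnion b R S) {x : A} (hx : x ∈ Submodule.span ℤ S) :
    ∃ s : Multiset A, s.sum = x ∧ ∀ β ∈ s, β ∈ S ∧ 2 ≤ coroot b β x := by
  obtain ⟨s, hs, rfl⟩ : ∃ s : Multiset A, (∀ β ∈ s, β ∈ S) ∧ s.sum = x := by
    refine AddSubmonoid.exists_multiset_of_mem_closure ?_
    have hneg : S ∪ -S = S := Set.union_eq_left.2 fun β hβ => by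
      simpa using h.neg_mem_of_isComponentUnion hS hβ
    rw [← hneg, ← AddSubgroup.closure_toAddSubmonoid, ← Submodule.span_int_eq_addSubgroupClosure]
    exact hx
  exact h.exists_multiset_two_le_coroot_sum hS s hs

theorem eq_zero_of_forall_form_eq_zero (h : IsLFRSS (fun x y => b x y) R) {x : A}
    (hx : x ∈ Submodule.span ℤ (realRoots b R)) (horth : ∀ β ∈ realRoots b R, b β x = 0) :
    x = 0 := by
  obtain ⟨s, rfl, hs⟩ := h.exists_multiset_two_le_coroot isComponentUnion_realRoots hx
  have hs0 : s = 0 := Multiset.eq_zero_of_forall_notMem fun β hβ => by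
    have := (h.coroot_eq_zero (hs β hβ).1).2 (horth β (hs β hβ).1)
    have := (hs β hβ).2
    omega
  rw [hs0, Multiset.sum_zero]

theorem form_eq_zero_of_mem_span (h : IsLFRSS (fun x y => b x y) R) (hS : IsComponentUnion b R S)
    {x y : A} (hx : x ∈ Submodule.span ℤ S) (hy : y ∈ Submodule.span ℤ (realRoots b R \ S)) :
    b x y = 0 := by
  have hroot : ∀ δ ∈ realRoots b R \ S, Submodule.span ℤ S ≤ LinearMap.ker (b δ) :=
    fun δ hδ => Submodule.span_le.2 fun β hβ => by
      rw [SetLike.mem_coe, LinearMap.mem_ker, h.form_symm]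
      by_contra hne
      exact hδ.2 (hS.mem_of_form_ne_zero β hβ δ hδ.1 hne)
  have hle : Submodule.span ℤ (realRoots b R \ S) ≤ LinearMap.ker (b x) :=
    Submodule.span_le.2 fun δ hδ => by
      rw [SetLike.mem_coe, LinearMap.mem_ker, h.form_symm]
      exact hroot δ hδ hx
  exact hle hy

theorem disjoint_span_span_diff (h : IsLFRSS (fun x y => b x y) R) (hS : IsComponentUnion b R S) :
    Disjoint (Submodule.span ℤ S) (Submodule.span ℤ (realRoots b R \ S)) := by
  refine Submodule.disjoint_def.2 fun x hx hx' => ?_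
  refine h.eq_zero_of_forall_form_eq_zero (Submodule.span_mono hS.subset hx) fun β hβ => ?_
  by_cases hβS : β ∈ S
  · exact h.form_eq_zero_of_mem_span hS (Submodule.subset_span hβS) hx'
  · rw [h.form_symm]
    exact h.form_eq_zero_of_mem_span hS hx (Submodule.subset_span ⟨hβ, hβS⟩)

theorem mem_of_mem_span (h : IsLFRSS (fun x y => b x y) R) (hS : IsComponentUnion b R S) {β : A}
    (hβ : β ∈ realRoots b R) (hspan : β ∈ Submodule.span ℤ S) : β ∈ S := by
  by_contra hn
  exact hβ.2 (h.form_eq_zero_of_mem_span hS hspan (Submodule.subset_span ⟨hβ, hn⟩))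

theorem isComponentUnion_diff (h : IsLFRSS (fun x y => b x y) R) (hS : IsComponentUnion b R S) :
    IsComponentUnion b R (realRoots b R \ S) :=
  ⟨Set.sdiff_subset, fun β hβ δ hδ hne => ⟨hδ, fun hδS =>
    hβ.2 (hS.mem_of_form_ne_zero δ hδS β hβ.1 (by rwa [h.form_symm]))⟩⟩

theorem exists_realRoot_of_chain (h : IsLFRSS (fun x y => b x y) R) {x α β y : A}
    (hα : α ∈ realRoots b R) (hβ : β ∈ realRoots b R) (hxα : b x α ≠ 0) (hαβ : b α β ≠ 0)
    (hβy : b β y ≠ 0) : ∃ δ ∈ realRoots b R, b x δ ≠ 0 ∧ b δ y ≠ 0 := by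
  by_cases hxβ : b x β = 0
  · by_cases hαy : b α y = 0
    · have hcoroot : coroot b α β ≠ 0 := fun h0 => hαβ ((h.coroot_eq_zero hα).1 h0)
      refine ⟨_, h.reflection_mem_realRoots hα hβ, ?_, ?_⟩
      · simpa [hxβ] using ⟨hcoroot, hxα⟩
      · simpa [hαy] using hβy
    · exact ⟨α, hα, hxα, hαy⟩
  · exact ⟨β, hβ, hxβ, hβy⟩

theorem isComponentUnion_component (h : IsLFRSS (fun x y => b x y) R) (γ : A) :
    IsComponentUnion b R (component b R γ) := by
  refine ⟨component_subset_realRoots, ?_⟩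
  rintro β ⟨hβ, ε, hε, hβε, hεγ⟩ δ hδ hne
  exact ⟨hδ, h.exists_realRoot_of_chain hβ hε (by rwa [h.form_symm]) hβε hεγ⟩

theorem mem_component_comm (h : IsLFRSS (fun x y => b x y) R) {β γ : A} (hγ : γ ∈ realRoots b R)
    (hβ : β ∈ component b R γ) : γ ∈ component b R β := by
  obtain ⟨-, ε, hε, hβε, hεγ⟩ := hβ
  exact ⟨hγ, ε, hε, by rwa [h.form_symm], by rwa [h.form_symm]⟩

theorem component_subset (h : IsLFRSS (fun x y => b x y) R) (hS : IsComponentUnion b R S) {γ : A}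
    (hγ : γ ∈ S) : component b R γ ⊆ S := by
  rintro β ⟨hβ, ε, hε, hβε, hεγ⟩
  exact hS.mem_of_form_ne_zero ε (hS.mem_of_form_ne_zero γ hγ ε hε (by rwa [h.form_symm])) β hβ
    (by rwa [h.form_symm])

theorem component_eq_of_mem (h : IsLFRSS (fun x y => b x y) R) {β γ : A}
    (hγ : γ ∈ realRoots b R) (hβ : β ∈ component b R γ) : component b R β = component b R γ :=
  (h.component_subset (h.isComponentUnion_component γ) hβ).antisymm
    (h.component_subset (h.isComponentUnion_component β) (h.mem_component_comm hγ hβ))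

theorem exists_pos_mul_form_self_of_form_ne_zero (h : IsLFRSS (fun x y => b x y) R) {β δ : A}
    (hβ : β ∈ realRoots b R) (hδ : δ ∈ realRoots b R) (hne : b β δ ≠ 0) :
    ∃ r : ℤ, 0 < r ∧ 12 * b β β = r * b δ δ := by
  have hcomm := h.coroot_mul_self_comm hβ hδ
  have hne1 : coroot b β δ ≠ 0 := fun h0 => hne ((h.coroot_eq_zero hβ).1 h0)
  have hpos : 0 < coroot b β δ * coroot b δ β :=
    (h.coroot_mul_coroot_mem_Icc hβ hδ).1.lt_of_ne' <| mul_ne_zero hne1 fun h0 =>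
      hne1 ((h.coroot_eq_zero_comm hβ hδ).2 h0)
  obtain ⟨c, hc⟩ : coroot b β δ ∣ 12 := by
    have := abs_le.1 (h.abs_coroot_le_four hβ hδ)
    generalize coroot b β δ = m at *
    obtain ⟨hlo, hhi⟩ := this
    interval_cases m <;> simp_all
  refine ⟨c * coroot b δ β, ?_, ?_⟩
  · have : 0 < c * coroot b β δ := by rw [mul_comm, ← hc]; norm_num
    nlinarith [mul_pos this hpos, sq_nonneg (coroot b β δ)]
  · have hcF : (12 : F) = coroot b β δ * c := by exact_mod_cast hc
    push_cast
    linear_combination b β β * hcF + (c : F) * hcomm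

theorem exists_pos_mul_form_self_of_mem_component (h : IsLFRSS (fun x y => b x y) R) {β γ : A}
    (hγ : γ ∈ realRoots b R) (hβ : β ∈ component b R γ) :
    ∃ r : ℤ, 0 < r ∧ 144 * b β β = r * b γ γ := by
  obtain ⟨hβ, δ, hδ, hβδ, hδγ⟩ := hβ
  obtain ⟨r, hr, hrβ⟩ := h.exists_pos_mul_form_self_of_form_ne_zero hβ hδ hβδ
  obtain ⟨s, hs, hsδ⟩ := h.exists_pos_mul_form_self_of_form_ne_zero hδ hγ hδγ
  refine ⟨r * s, mul_pos hr hs, ?_⟩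
  push_cast
  linear_combination 12 * hrβ + (r : F) * hsδ

theorem exists_int_mul_form (h : IsLFRSS (fun x y => b x y) R) {γ x : A} (hγ : γ ∈ realRoots b R)
    (hx : x ∈ Submodule.span ℤ (component b R γ)) (y : A) :
    ∃ k : ℤ, 288 * b x y = k * b γ γ := by
  induction hx using Submodule.span_induction with
  | mem β hβ =>
    obtain ⟨r, -, hr⟩ := h.exists_pos_mul_form_self_of_mem_component hγ hβ
    refine ⟨coroot b β y * r, ?_⟩
    push_cast
    linear_combination 144 * h.coroot_spec hβ.1 y + (coroot b β y : F) * hr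
  | zero => exact ⟨0, by simp⟩
  | add x z _ _ hx hz =>
    obtain ⟨k, hk⟩ := hx
    obtain ⟨l, hl⟩ := hz
    refine ⟨k + l, ?_⟩
    rw [map_add b, LinearMap.add_apply]
    push_cast
    linear_combination hk + hl
  | smul n x _ hx =>
    obtain ⟨k, hk⟩ := hx
    refine ⟨n * k, ?_⟩
    rw [map_smul b, LinearMap.smul_apply, zsmul_eq_mul]
    push_cast
    linear_combination (n : F) * hk

theorem exists_pos_mul_form_self (h : IsLFRSS (fun x y => b x y) R) {γ x : A}
    (hγ : γ ∈ realRoots b R) (hx : x ∈ Submodule.span ℤ (component b R γ)) (hx0 : x ≠ 0) :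
    ∃ k : ℤ, 0 < k ∧ 288 * b x x = k * b γ γ := by
  obtain ⟨s, hsum, hs⟩ := h.exists_multiset_two_le_coroot (h.isComponentUnion_component γ) hx
  have hpartial : ∀ t : Multiset A, t ≠ 0 →
      (∀ β ∈ t, β ∈ component b R γ ∧ 2 ≤ coroot b β x) →
      ∃ k : ℤ, 0 < k ∧ 288 * b t.sum x = k * b γ γ := by
    intro t
    induction t using Multiset.induction with
    | empty => exact fun h0 => absurd rfl h0
    | cons β t ih =>
      intro _ ht
      obtain ⟨hβ, hβx⟩ := ht β (by simp)
      obtain ⟨r, hr0, hr⟩ := h.exists_pos_mul_form_self_of_mem_component hγ hβ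
      have hβsum : 288 * b β x = (coroot b β x * r : ℤ) * b γ γ := by
        push_cast
        linear_combination 144 * h.coroot_spec hβ.1 x + (coroot b β x : F) * hr
      have hpos : 0 < coroot b β x * r := mul_pos (by omega) hr0
      rcases eq_or_ne t 0 with rfl | ht0
      · exact ⟨_, hpos, by simpa using hβsum⟩
      · obtain ⟨k, hk0, hk⟩ := ih ht0 fun ε hε => ht ε (by simp [hε])
        refine ⟨_, add_pos hpos hk0, ?_⟩
        rw [Multiset.sum_cons, map_add b, LinearMap.add_apply, mul_add, hβsum, hk, Int.cast_add,
          add_mul]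
  have hs0 : s ≠ 0 := by
    rintro rfl
    exact hx0 (by simpa using hsum.symm)
  simpa [hsum] using hpartial s hs0 hs

theorem eq_zero_of_form_self_eq_zero (h : IsLFRSS (fun x y => b x y) R) {γ x : A}
    (hγ : γ ∈ realRoots b R) (hx : x ∈ Submodule.span ℤ (component b R γ)) (hxx : b x x = 0) :
    x = 0 := by
  by_contra hx0
  obtain ⟨k, hk0, hk⟩ := h.exists_pos_mul_form_self hγ hx hx0
  rw [hxx, mul_zero] at hk
  exact (mul_ne_zero (by exact_mod_cast hk0.ne') hγ.2) hk.symm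

theorem exists_componentForm (h : IsLFRSS (fun x y => b x y) R) {γ : A}
    (hγ : γ ∈ realRoots b R) :
    ∃ B : LinearMap.BilinForm ℤ (Submodule.span ℤ (component b R γ)),
      (∀ x y : Submodule.span ℤ (component b R γ), 288 * b (x : A) (y : A) = B x y * b γ γ) ∧
      ∀ x, x ≠ 0 → 0 < B x x := by
  choose f hf using fun x y : Submodule.span ℤ (component b R γ) =>
    h.exists_int_mul_form hγ x.2 (y : A)
  have hf_eq : ∀ {x y : Submodule.span ℤ (component b R γ)} {k : ℤ},
      288 * b (x : A) (y : A) = k * b γ γ → f x y = k := fun {x y k} hk => by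
    rw [hf] at hk
    exact_mod_cast mul_right_cancel₀ hγ.2 hk
  refine ⟨LinearMap.mk₂ ℤ f (fun x y z => hf_eq ?_) (fun n x y => hf_eq ?_)
    (fun x y z => hf_eq ?_) (fun n x y => hf_eq ?_), hf, fun x hx0 => ?_⟩
  · push_cast
    rw [add_mul, ← hf, ← hf, map_add b, LinearMap.add_apply, mul_add]
  · push_cast
    rw [smul_eq_mul, Int.cast_mul, mul_assoc, ← hf, map_smul b, LinearMap.smul_apply, zsmul_eq_mul,
      mul_left_comm]
  · push_cast
    rw [add_mul, ← hf, ← hf, map_add, mul_add]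
  · push_cast
    rw [smul_eq_mul, Int.cast_mul, mul_assoc, ← hf, map_smul, zsmul_eq_mul, mul_left_comm]
  · obtain ⟨k, hk0, hk⟩ := h.exists_pos_mul_form_self hγ x.2 (by simpa using hx0)
    exact hk0.trans_eq (hf_eq hk).symm

theorem isPosDefRootSystem_component (h : IsLFRSS (fun x y => b x y) R) {γ : A}
    (hγ : γ ∈ realRoots b R) :
    ∃ B : LinearMap.BilinForm ℤ (Submodule.span ℤ (component b R γ)),
      IsPosDefRootSystem B (Subtype.val ⁻¹' component b R γ) := by
  obtain ⟨B, hB, hpos⟩ := h.exists_componentForm hγ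
  have hB_eq : ∀ {x y z w : Submodule.span ℤ (component b R γ)} (m n : ℤ),
      m * b (x : A) y = n * b (z : A) w ↔ m * B x y = n * B z w := fun {x y z w} m n => by
    rw [← mul_right_inj' (show (288 : F) ≠ 0 by norm_num), mul_left_comm, hB,
      mul_left_comm 288 (n : F), hB, ← mul_assoc, ← mul_assoc, mul_left_inj' hγ.2]
    norm_cast
  have hB_ne : ∀ {x y : Submodule.span ℤ (component b R γ)}, b (x : A) y ≠ 0 → B x y ≠ 0 :=
    fun {x y} hne h0 => hne (by simpa using (hB_eq (z := 0) (w := 0) 1 0).2 (by simpa using h0))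
  refine ⟨B, ⟨fun x y => ?_, hpos, Submodule.span_span_coe_preimage, ?_, fun α hα β _ => ?_,
    fun α hα β hβ k hk => ?_, fun α hα β hβ => ?_⟩⟩
  · simpa using (hB_eq (x := x) (y := y) (z := y) (w := x) 1 1).1 (by simpa using h.form_symm x y)
  · rintro α hα rfl
    exact (component_subset_realRoots hα).2 (by simp)
  · exact ⟨_, (hB_eq 2 _).1 (by simpa using h.coroot_spec hα.1 β)⟩
  · have hcoroot := h.coroot_eq_of_eq hα.1 (by simpa using (hB_eq 2 k).2 hk)
    refine h.mem_of_mem_span (h.isComponentUnion_component γ) ?_ (β - k • α).2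
    simpa [hcoroot] using h.reflection_mem_realRoots hα.1 hβ.1
  · have hβα : (α : A) ∈ component b R (β : A) := by
      rwa [h.component_eq_of_mem hγ hβ]
    obtain ⟨-, δ, hδ, hαδ, hδβ⟩ := hβα
    have hδγ : δ ∈ component b R γ :=
      (h.isComponentUnion_component γ).mem_of_form_ne_zero α hα δ hδ hαδ
    exact ⟨⟨δ, Submodule.subset_span hδγ⟩, hδγ, hB_ne hαδ, hB_ne hδβ⟩

theorem exists_base_component (h : IsLFRSS (fun x y => b x y) R) {γ : A}
    (hγ : γ ∈ realRoots b R) :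
    ∃ P ⊆ component b R γ, LinearIndepOn ℤ id P ∧
      Submodule.span ℤ P = Submodule.span ℤ (component b R γ) := by
  obtain ⟨B, hB⟩ := h.isPosDefRootSystem_component hγ
  obtain ⟨P, hP, hind, hspan⟩ := hB.exists_base
  let ι := (Submodule.span ℤ (component b R γ)).subtype
  refine ⟨ι '' P, Set.image_subset_iff.2 hP, ?_, ?_⟩
  · exact (show LinearIndepOn ℤ ι P from hind.map' ι (Submodule.ker_subtype _)).id_image
  · rw [← Submodule.map_span, hspan, Submodule.map_top, Submodule.range_subtype]

theorem exists_base_of_isComponentUnion (h : IsLFRSS (fun x y => b x y) R)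
    (hS : IsComponentUnion b R S) :
    ∃ P ⊆ S, LinearIndepOn ℤ id P ∧ Submodule.span ℤ P = Submodule.span ℤ S := by
  choose! f hf_sub hf_ind hf_span using fun (C : Set A) (hC : ∃ γ ∈ S, component b R γ = C) =>
    show ∃ P ⊆ C, LinearIndepOn ℤ id P ∧ Submodule.span ℤ P = Submodule.span ℤ C by
      obtain ⟨γ, hγ, rfl⟩ := hC
      exact h.exists_base_component (hS.subset hγ)
  let ι := {C : Set A // ∃ γ ∈ S, component b R γ = C}
  have hsub : ∀ C : ι, C.1 ⊆ S := by
    rintro ⟨C, γ, hγ, rfl⟩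
    exact h.component_subset hS hγ
  refine ⟨⋃ C : ι, f C, Set.iUnion_subset fun C => (hf_sub C C.2).trans (hsub C), ?_, ?_⟩
  · refine linearIndepOn_id_iUnion_finite (fun C => hf_ind C C.2) fun C t _ hCt => ?_
    obtain ⟨C, γ, hγ, rfl⟩ := C
    rw [hf_span _ ⟨γ, hγ, rfl⟩]
    refine (h.disjoint_span_span_diff (h.isComponentUnion_component γ)).mono_right
      (iSup₂_le fun C' hC' => ?_)
    rw [hf_span C' C'.2]
    refine Submodule.span_mono fun β hβ => ⟨hS.subset (hsub C' hβ), fun hβγ => hCt ?_⟩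
    obtain ⟨C', γ', hγ', rfl⟩ := C'
    convert hC' using 2
    rw [← h.component_eq_of_mem (hS.subset hγ) hβγ, h.component_eq_of_mem (hS.subset hγ') hβ]
  · rw [Submodule.span_iUnion]
    refine le_antisymm (iSup_le fun C => ?_) (Submodule.span_le.2 fun β hβ => ?_)
    · exact hf_span C C.2 ▸ Submodule.span_mono (hsub C)
    · refine Submodule.mem_iSup_of_mem (⟨_, β, hβ, rfl⟩ : ι) ?_
      rw [hf_span _ ⟨β, hβ, rfl⟩]
      exact Submodule.subset_span (mem_component_self (hS.subset hβ))

end IsLFRSS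

section

variable {K M : Type*} [CommRing K] [AddCommGroup M] [Module K M] {Q : Set M} {α π : M} {k : K}

theorem linearIndepOn_insert_sdiff_singleton (hQ : LinearIndepOn K id Q) (hπ : π ∈ Q)
    (hk : k • α - π ∈ Submodule.span K (Q \ {π})) : LinearIndepOn K id (insert α (Q \ {π})) := by
  refine (hQ.mono Set.sdiff_subset).id_insert' fun m hm => ?_
  refine hQ.eq_zero_of_smul_mem_span hπ m ?_
  have hmπ : m • π = k • (m • α) - m • (k • α - π) := by module
  simpa [hmπ] using Submodule.sub_mem _ (Submodule.smul_mem _ k hm) (Submodule.smul_mem _ m hk)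

theorem span_le_span_insert_sdiff_singleton (hk : k • α - π ∈ Submodule.span K (Q \ {π})) :
    Submodule.span K Q ≤ Submodule.span K (insert α (Q \ {π})) := by
  refine Submodule.span_le.2 fun x hx => ?_
  by_cases hxπ : x = π
  · simpa [hxπ] using Submodule.sub_mem _
      (Submodule.smul_mem _ k (Submodule.subset_span (Set.mem_insert _ _)))
      (Submodule.span_mono (Set.subset_insert α _) hk)
  · exact Submodule.subset_span (Set.mem_insert_of_mem _ ⟨hx, hxπ⟩)

end

namespace IsLFRSS

variable {F : Type*} [Field F] [CharZero F] {A : Type*} [AddCommGroup A]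
  {b : A →ₗ[ℤ] A →ₗ[ℤ] F} {R S : Set A}

theorem eq_zero_of_smul_eq_zero (h : IsLFRSS (fun x y => b x y) R) {k : ℤ} (hk : k ≠ 0) {x : A}
    (hx : k • x = 0) : x = 0 := by
  refine h.2 x fun y => ?_
  have hb : (k : F) * b x y = 0 := by
    rw [← zsmul_eq_mul, ← LinearMap.smul_apply, ← map_smul, hx, map_zero, LinearMap.zero_apply]
  exact (mul_eq_zero.1 hb).resolve_left (by exact_mod_cast hk)

theorem sub_or_add_mem_realRoots (h : IsLFRSS (fun x y => b x y) R) {α β : A} (hα : α ∈ R)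
    (hαα : b α α = 0) (hβ : β ∈ R) (hββ : b β β = 0) (hne : b α β ≠ 0) :
    β - α ∈ realRoots b R ∨ β + α ∈ realRoots b R :=
  (h.1.ns_string α hα hαα β hβ hne).imp
    (fun hm => ⟨hm, by simpa [hαα, hββ, h.form_symm β α, ← neg_add', ← two_mul] using hne⟩)
    (fun hm => ⟨hm, by simpa [hαα, hββ, h.form_symm β α, ← two_mul] using hne⟩)

theorem mem_of_isotropic_form_ne_zero (h : IsLFRSS (fun x y => b x y) R) {M : Submodule ℤ A}
    (hM : realRoots b R ⊆ M) {α β : A} (hα : α ∈ R) (hαM : α ∈ M) (hαα : b α α = 0) (hβ : β ∈ R)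
    (hne : b α β ≠ 0) : β ∈ M := by
  by_cases hββ : b β β = 0
  · rcases h.sub_or_add_mem_realRoots hα hαα hβ hββ hne with hm | hm
    · exact (M.sub_mem_iff_left hαM).1 (hM hm)
    · exact (M.add_mem_iff_left hαM).1 (hM hm)
  · exact hM ⟨hβ, hββ⟩

theorem exists_isotropic_form_ne_zero (h : IsLFRSS (fun x y => b x y) R) {M : Submodule ℤ A}
    (hM : realRoots b R ⊆ M) {α β δ : A} (hα : α ∈ R) (hαM : α ∈ M) (hαα : b α α = 0)
    (hβ : β ∈ R) (hαβ : b α β ≠ 0) (hβδ : b β δ ≠ 0) :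
    ∃ ε ∈ R, ε ∈ M ∧ b ε ε = 0 ∧ b ε δ ≠ 0 := by
  by_cases hββ : b β β = 0
  · exact ⟨β, hβ, h.mem_of_isotropic_form_ne_zero hM hα hαM hαα hβ hαβ, hββ, hβδ⟩
  by_cases hαδ : b α δ = 0
  · have hβ' : β ∈ realRoots b R := ⟨hβ, hββ⟩
    have hcoroot : coroot b β α ≠ 0 := fun h0 =>
      hαβ (by rw [h.form_symm, (h.coroot_eq_zero hβ').1 h0])
    refine ⟨_, h.reflection_mem hβ' hα, M.sub_mem hαM (M.smul_mem _ (hM hβ')), ?_, ?_⟩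
    · rw [h.form_reflection hβ', hαα]
    · simpa [hαδ] using ⟨hcoroot, hβδ⟩
  · exact ⟨α, hα, hαM, hαα, hαδ⟩

theorem span_insert_isotropic_eq_top (h : IsLFRSS (fun x y => b x y) R)
    (hconn : IsConnectedSet (fun x y => b x y) (R \ formRadical fun x y => b x y)) {α : A}
    (hα : α ∈ R) (hα0 : α ≠ 0) (hαα : b α α = 0) :
    Submodule.span ℤ (insert α (realRoots b R)) = ⊤ := by
  set M := Submodule.span ℤ (insert α (realRoots b R))
  have hM : realRoots b R ⊆ M := (Set.subset_insert _ _).trans Submodule.subset_span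
  have hαM : α ∈ M := Submodule.subset_span (Set.mem_insert _ _)
  rw [eq_top_iff, ← h.span_eq_top]
  refine Submodule.span_le.2 fun β hβ => ?_
  rcases eq_or_ne β 0 with rfl | hβ0
  · exact M.zero_mem
  obtain ⟨n, c, hc, h0, hlast, hstep⟩ := hconn α ⟨hα, fun hr => hα0 (h.2 α hr)⟩ β
    ⟨hβ, fun hr => hβ0 (h.2 β hr)⟩
  suffices hchain : ∀ i, c i ∈ M ∧ ∀ y, b (c i) y ≠ 0 →
      ∃ ε ∈ R, ε ∈ M ∧ b ε ε = 0 ∧ b ε y ≠ 0 from hlast ▸ (hchain _).1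
  refine fun i => Fin.induction ?_ (fun i ih => ?_) i
  · rw [h0]
    exact ⟨hαM, fun y hy => ⟨α, hα, hαM, hαα, hy⟩⟩
  · obtain ⟨ε, hε, hεM, hεε, hεc⟩ := ih.2 _ (hstep i)
    have hcR := (hc i.succ).1
    exact ⟨h.mem_of_isotropic_form_ne_zero hM hε hεM hεε hcR hεc,
      fun y hy => h.exists_isotropic_form_ne_zero hM hε hεM hεε hcR hεc hy⟩

theorem mem_span_of_forall_form_eq_zero (h : IsLFRSS (fun x y => b x y) R)
    (hS : IsComponentUnion b R S) {x : A} (hx : x ∈ Submodule.span ℤ (realRoots b R))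
    (horth : ∀ β ∈ realRoots b R, β ∉ S → b β x = 0) : x ∈ Submodule.span ℤ S := by
  rw [hS.span_realRoots_eq_sup, Submodule.mem_sup] at hx
  obtain ⟨y, hy, z, hz, rfl⟩ := hx
  have hz0 : z = 0 := by
    refine h.eq_zero_of_forall_form_eq_zero (Submodule.span_mono Set.sdiff_subset hz)
      fun β hβ => ?_
    by_cases hβS : β ∈ S
    · exact h.form_eq_zero_of_mem_span hS (Submodule.subset_span hβS) hz
    · have hβy := h.form_eq_zero_of_mem_span hS hy (Submodule.subset_span ⟨hβ, hβS⟩)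
      simpa [h.form_symm β y, hβy] using horth β hβ hβS
  rwa [hz0, add_zero]

theorem exists_base_of_smul_sub_mem (h : IsLFRSS (fun x y => b x y) R)
    (hS : IsComponentUnion b R S) {P : Set A} (hP : P ⊆ S) (hind : LinearIndepOn ℤ id P)
    (hspan : Submodule.span ℤ P = Submodule.span ℤ S) {α π : A} (hπ : π ∈ P) (hα : α ∈ R)
    (htop : Submodule.span ℤ (insert α (realRoots b R)) = ⊤) {k : ℤ}
    (hk : k • α - π ∈ Submodule.span ℤ (P \ {π}) ⊔ Submodule.span ℤ (realRoots b R \ S)) :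
    ∃ P ⊆ R, LinearIndepOn ℤ id P ∧ Submodule.span ℤ P = ⊤ := by
  obtain ⟨P', hP', hind', hspan'⟩ :=
    h.exists_base_of_isComponentUnion (h.isComponentUnion_diff hS)
  have hπP' : π ∉ P' := fun hm => (hP' hm).2 (hP hπ)
  have hQ : LinearIndepOn ℤ id (P ∪ P') := hind.id_union hind' (by
    rw [hspan, hspan']
    exact h.disjoint_span_span_diff hS)
  have hk' : k • α - π ∈ Submodule.span ℤ ((P ∪ P') \ {π}) := by
    rwa [Set.union_sdiff_distrib, Set.sdiff_singleton_eq_self hπP', Submodule.span_union, hspan']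
  refine ⟨insert α ((P ∪ P') \ {π}), ?_,
    linearIndepOn_insert_sdiff_singleton hQ (Or.inl hπ) hk', ?_⟩
  · refine Set.insert_subset hα (Set.sdiff_subset.trans (Set.union_subset ?_ ?_))
    · exact fun x hx => (hS.subset (hP hx)).1
    · exact fun x hx => (hP' hx).1.1
  · have hle := span_le_span_insert_sdiff_singleton hk'
    rw [Submodule.span_union, hspan, hspan', ← hS.span_realRoots_eq_sup] at hle
    rw [eq_top_iff, ← htop, Submodule.span_le]
    exact Set.insert_subset (Submodule.subset_span (Set.mem_insert _ _))
      (Submodule.span_le.1 hle)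

end IsLFRSS

/-! ### Roots outside the lattice of real roots -/

/-- An isotropic root outside the lattice spanned by the real roots, that is, an element of
`R \ span R_re`: all of `R_re` is in that lattice. -/
structure IsOuterRoot {F : Type*} [Field F] {A : Type*} [AddCommGroup A]
    (b : A →ₗ[ℤ] A →ₗ[ℤ] F) (R : Set A) (α : A) : Prop where
  mem : α ∈ R
  isotropic : b α α = 0
  notMem_span : α ∉ Submodule.span ℤ (realRoots b R)

/-- The roots in the component of `η` whose coroot takes the value `1` at `α`. For an outer root `α`
that is not orthogonal to this component, they contain a base of it. -/
def unitRoots {F : Type*} [Field F] {A : Type*} [AddCommGroup A]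
    (b : A →ₗ[ℤ] A →ₗ[ℤ] F) (R : Set A) (α η : A) : Set A :=
  {y | y ∈ component b R η ∧ coroot b y α = 1}

theorem unitRoots_subset_realRoots {F : Type*} [Field F] {A : Type*} [AddCommGroup A]
    {b : A →ₗ[ℤ] A →ₗ[ℤ] F} {R : Set A} {α η : A} : unitRoots b R α η ⊆ realRoots b R :=
  fun _ hy => hy.1.1

namespace IsLFRSS

variable {F : Type*} [Field F] [CharZero F] {A : Type*} [AddCommGroup A]
  {b : A →ₗ[ℤ] A →ₗ[ℤ] F} {R S : Set A} {α : A}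

theorem two_mul_form_of_coroot_eq_one (h : IsLFRSS (fun x y => b x y) R) {y : A}
    (hy : y ∈ realRoots b R) (hyα : coroot b y α = 1) : 2 * b y α = b y y := by
  simpa [hyα] using h.coroot_spec hy α

theorem coroot_lt_two (h : IsLFRSS (fun x y => b x y) R) (hα : IsOuterRoot b R α) {γ : A}
    (hγ : γ ∈ realRoots b R) : coroot b γ α < 2 := by
  by_contra! hge
  have hnorm : b (α - γ) (α - γ) = ((1 - coroot b γ α : ℤ) : F) * b γ γ := by
    simp only [map_sub, LinearMap.sub_apply, hα.isotropic, h.form_symm α γ]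
    push_cast
    linear_combination -h.coroot_spec hγ α
  have hmem : α - γ ∈ realRoots b R := by
    refine ⟨h.sub_mem hγ hα.mem (by omega), ?_⟩
    rw [hnorm]
    exact mul_ne_zero (by exact_mod_cast (show 1 - coroot b γ α ≠ 0 by omega)) hγ.2
  exact hα.notMem_span ((Submodule.sub_mem_iff_left _ (Submodule.subset_span hγ)).1
    (Submodule.subset_span hmem))

theorem neg_one_le_coroot (h : IsLFRSS (fun x y => b x y) R) (hα : IsOuterRoot b R α) {γ : A}
    (hγ : γ ∈ realRoots b R) : -1 ≤ coroot b γ α := by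
  have := h.coroot_lt_two hα (h.neg_mem_realRoots hγ)
  rw [h.coroot_neg hγ] at this
  omega

theorem isOuterRoot_sub (h : IsLFRSS (fun x y => b x y) R) (hα : IsOuterRoot b R α) {y : A}
    (hy : y ∈ realRoots b R) (hyα : coroot b y α = 1) : IsOuterRoot b R (α - y) where
  mem := h.sub_mem hy hα.mem (by omega)
  isotropic := by simpa [hyα, hα.isotropic] using h.form_reflection hy α α
  notMem_span hmem :=
    hα.notMem_span ((Submodule.sub_mem_iff_left _ (Submodule.subset_span hy)).1 hmem)

theorem exists_coroot_eq_one (h : IsLFRSS (fun x y => b x y) R) (hα : IsOuterRoot b R α)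
    (hS : IsComponentUnion b R S) {β : A} (hβ : β ∈ S) (hne : b β α ≠ 0) :
    ∃ y ∈ S, coroot b y α = 1 ∧ (y = β ∨ y = -β) := by
  have hβ' := hS.subset hβ
  have hcoroot : coroot b β α ≠ 0 := fun h0 => hne ((h.coroot_eq_zero hβ').1 h0)
  have hlt := h.coroot_lt_two hα hβ'
  have hge := h.neg_one_le_coroot hα hβ'
  rcases hcoroot.lt_or_gt with hneg | hpos
  · refine ⟨-β, h.neg_mem_of_isComponentUnion hS hβ, ?_, Or.inr rfl⟩
    rw [h.coroot_neg hβ']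
    omega
  · exact ⟨β, hβ, by omega, Or.inl rfl⟩

theorem reflection_mem_unitRoots (h : IsLFRSS (fun x y => b x y) R) {η δ y : A}
    (hδ : δ ∈ component b R η) (hδα : coroot b δ α = 0) (hy : y ∈ unitRoots b R α η) :
    y - coroot b δ y • δ ∈ unitRoots b R α η := by
  have hmem := h.reflection_mem_realRoots hδ.1 hy.1.1
  refine ⟨h.mem_of_mem_span (h.isComponentUnion_component η) hmem (Submodule.sub_mem _
    (Submodule.subset_span hy.1) (Submodule.smul_mem _ _ (Submodule.subset_span hδ))),
    h.coroot_eq_of_eq hmem ?_⟩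
  have hα : α - coroot b δ α • δ = α := by rw [hδα, zero_smul, sub_zero]
  rw [h.form_reflection hδ.1, ← hα, h.form_reflection hδ.1, h.coroot_spec hy.1.1, hy.2]

theorem exists_unitRoot_form_ne_zero (h : IsLFRSS (fun x y => b x y) R) (hα : IsOuterRoot b R α)
    {η δ : A} (hη : η ∈ realRoots b R) (hηα : coroot b η α = 1) (hδ : δ ∈ component b R η) :
    ∃ y ∈ unitRoots b R α η, b δ y ≠ 0 := by
  have hC := h.isComponentUnion_component (b := b) (R := R) η
  have hηK : η ∈ unitRoots b R α η := ⟨mem_component_self hη, hηα⟩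
  by_cases hδη : b δ η = 0
  · obtain ⟨-, ε, hε, hδε, hεη⟩ := id hδ
    have hεC := hC.mem_of_form_ne_zero δ hδ ε hε hδε
    by_cases hεα : b ε α = 0
    · refine ⟨_, h.reflection_mem_unitRoots hεC ((h.coroot_eq_zero hε).2 hεα) hηK, ?_⟩
      have : coroot b ε η ≠ 0 := fun h0 => hεη ((h.coroot_eq_zero hε).1 h0)
      simpa [hδη] using ⟨this, hδε⟩
    · obtain ⟨y, hyC, hyα, rfl | rfl⟩ := h.exists_coroot_eq_one hα hC hεC hεα
      · exact ⟨y, ⟨hyC, hyα⟩, hδε⟩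
      · exact ⟨-ε, ⟨hyC, hyα⟩, by simpa using hδε⟩
  · exact ⟨η, hηK, hδη⟩

theorem exists_unitRoot_coroot_pos (h : IsLFRSS (fun x y => b x y) R) (hα : IsOuterRoot b R α)
    {η δ : A} (hη : η ∈ realRoots b R) (hηα : coroot b η α = 1) (hδ : δ ∈ component b R η)
    (hδα : coroot b δ α = 0) : ∃ y ∈ unitRoots b R α η, 0 < coroot b δ y := by
  obtain ⟨y, hy, hδy⟩ := h.exists_unitRoot_form_ne_zero hα hη hηα hδ
  have hne : coroot b δ y ≠ 0 := fun h0 => hδy ((h.coroot_eq_zero hδ.1).1 h0)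
  rcases hne.lt_or_gt with hneg | hpos
  · refine ⟨_, h.reflection_mem_unitRoots hδ hδα hy, ?_⟩
    rw [map_sub, map_smul, h.coroot_self hδ.1, smul_eq_mul]
    omega
  · exact ⟨y, hy, hpos⟩

theorem span_unitRoots (h : IsLFRSS (fun x y => b x y) R) (hα : IsOuterRoot b R α) {η : A}
    (hη : η ∈ realRoots b R) (hηα : coroot b η α = 1)
    (hone : ∀ δ ∈ component b R η, coroot b δ α = 0 → ∀ y ∈ unitRoots b R α η,
      0 < coroot b δ y → coroot b δ y = 1) :
    Submodule.span ℤ (unitRoots b R α η) = Submodule.span ℤ (component b R η) := by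
  refine (Submodule.span_mono fun _ hy => hy.1).antisymm (Submodule.span_le.2 fun δ hδ => ?_)
  by_cases hδα : b δ α = 0
  · have hδα := (h.coroot_eq_zero hδ.1).2 hδα
    obtain ⟨y, hy, hpos⟩ := h.exists_unitRoot_coroot_pos hα hη hηα hδ hδα
    have hy' := h.reflection_mem_unitRoots hδ hδα hy
    rw [hone δ hδ hδα y hy hpos, one_smul] at hy'
    simpa using Submodule.sub_mem _ (Submodule.subset_span hy) (Submodule.subset_span hy')
  · obtain ⟨y, hyC, hyα, hy⟩ := h.exists_coroot_eq_one hα (h.isComponentUnion_component η) hδ hδα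
    have hspan := Submodule.subset_span (R := ℤ) (show y ∈ unitRoots b R α η from ⟨hyC, hyα⟩)
    rcases hy with rfl | rfl
    · exact hspan
    · simpa using hspan

theorem coroot_linearCombination_of_pairwise (h : IsLFRSS (fun x y => b x y) R) {T : Set A}
    (hT : T ⊆ realRoots b R) (hpair : T.Pairwise fun z y => coroot b z y = 1) (l : T →₀ ℤ)
    (z : T) : coroot b z (Finsupp.linearCombination ℤ (Subtype.val : T → A) l) =
      l z + l.sum fun _ n => n := by
  classical
  induction l using Finsupp.induction_linear with
  | zero => simp
  | add f g hf hg =>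
    rw [map_add, map_add, hf, hg, Finsupp.sum_add_index' (by simp) (by simp), Finsupp.add_apply]
    ring
  | single y n =>
    rw [Finsupp.linearCombination_single, map_smul, Finsupp.sum_single_index rfl, smul_eq_mul]
    rcases eq_or_ne y z with rfl | hyz
    · rw [h.coroot_self (hT y.2), Finsupp.single_eq_same]
      ring
    · rw [hpair z.2 y.2 fun e => hyz (Subtype.ext e.symm), Finsupp.single_eq_of_ne' hyz]
      ring

theorem linearIndepOn_of_pairwise (h : IsLFRSS (fun x y => b x y) R) {T : Set A}
    (hT : T ⊆ realRoots b R) (hpair : T.Pairwise fun z y => coroot b z y = 1) :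
    LinearIndepOn ℤ id T := by
  refine linearIndependent_iff.2 fun l (hl : Finsupp.linearCombination ℤ Subtype.val l = 0) => ?_
  have hconst : ∀ z, l z = -l.sum fun _ n => n := fun z => by
    have := h.coroot_linearCombination_of_pairwise hT hpair l z
    rw [hl, map_zero] at this
    omega
  have hsum : (l.support.card + 1 : ℤ) * (l.sum fun _ n => n) = 0 := by
    have : (l.sum fun _ n => n) = l.support.card * -(l.sum fun _ n => n) := by
      conv_lhs => rw [Finsupp.sum, Finset.sum_congr rfl fun z _ => hconst z, Finset.sum_const,
        nsmul_eq_mul]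
    linear_combination this
  have hsum0 := (mul_eq_zero.1 hsum).resolve_left (by omega)
  ext z
  simp [hconst z, hsum0]

end IsLFRSS

/-- The real root `γ` is the projection of `2 α` to the span of an irreducible component of the real
roots. Whether an outer root `α` has such a `γ` is the case distinction of the proof. -/
def IsRootProjection {F : Type*} [Field F] {A : Type*} [AddCommGroup A]
    (b : A →ₗ[ℤ] A →ₗ[ℤ] F) (R : Set A) (α γ : A) : Prop :=
  γ ∈ realRoots b R ∧ (2 : ℤ) • α - γ ∈ Submodule.span ℤ (realRoots b R \ component b R γ)

namespace IsLFRSS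

variable {F : Type*} [Field F] [CharZero F] {A : Type*} [AddCommGroup A]
  {b : A →ₗ[ℤ] A →ₗ[ℤ] F} {R : Set A} {α γ : A}

theorem coroot_of_isRootProjection (h : IsLFRSS (fun x y => b x y) R)
    (hproj : IsRootProjection b R α γ) {β : A} (hβ : β ∈ component b R γ) :
    coroot b β γ = 2 * coroot b β α := by
  have horth := h.form_eq_zero_of_mem_span (h.isComponentUnion_component γ)
    (Submodule.subset_span hβ) hproj.2
  rw [map_sub, map_smul, zsmul_eq_mul, sub_eq_zero] at horth
  refine h.coroot_eq_of_eq hβ.1 ?_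
  push_cast at horth ⊢
  linear_combination 2 * h.coroot_spec hβ.1 α - 2 * horth

theorem mem_unitRoots_iff_of_isRootProjection (h : IsLFRSS (fun x y => b x y) R)
    (hproj : IsRootProjection b R α γ) {y : A} :
    y ∈ unitRoots b R α γ ↔ y ∈ component b R γ ∧ coroot b y γ = 2 :=
  and_congr_right fun hy => by
    rw [h.coroot_of_isRootProjection hproj hy]
    omega

theorem self_mem_unitRoots_of_isRootProjection (h : IsLFRSS (fun x y => b x y) R)
    (hproj : IsRootProjection b R α γ) : γ ∈ unitRoots b R α γ :=
  (h.mem_unitRoots_iff_of_isRootProjection hproj).2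
    ⟨mem_component_self hproj.1, h.coroot_self hproj.1⟩

theorem coroot_eq_one_of_isRootProjection (h : IsLFRSS (fun x y => b x y) R)
    (hproj : IsRootProjection b R α γ) {y : A} (hy : y ∈ unitRoots b R α γ \ {γ}) :
    coroot b γ y = 1 := by
  have hyγ := ((h.mem_unitRoots_iff_of_isRootProjection hproj).1 hy.1).2
  have hyR := hy.1.1.1
  have hpos := h.coroot_pos_comm hyR hproj.1 (by omega)
  have hle := (h.coroot_mul_coroot_mem_Icc hyR hproj.1).2
  have hne : coroot b γ y ≠ 2 := fun h2 => by
    have hcomm := h.coroot_mul_self_comm hyR hproj.1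
    rw [hyγ, h2] at hcomm
    exact hy.2 (h.eq_of_coroot_eq_two hyR hproj.1
      (mul_left_cancel₀ (by norm_num) hcomm).symm hyγ)
  rw [hyγ] at hle
  omega

theorem two_mul_form_self_of_isRootProjection (h : IsLFRSS (fun x y => b x y) R)
    (hproj : IsRootProjection b R α γ) {y : A} (hy : y ∈ unitRoots b R α γ \ {γ}) :
    2 * b y y = b γ γ := by
  have hcomm := h.coroot_mul_self_comm hy.1.1.1 hproj.1
  rw [((h.mem_unitRoots_iff_of_isRootProjection hproj).1 hy.1).2,
    h.coroot_eq_one_of_isRootProjection hproj hy] at hcomm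
  simpa using hcomm

theorem form_of_isRootProjection (h : IsLFRSS (fun x y => b x y) R)
    (hproj : IsRootProjection b R α γ) {y : A} (hy : y ∈ unitRoots b R α γ \ {γ}) :
    b y γ = b y y := by
  have hspec := h.coroot_spec hy.1.1.1 γ
  rw [((h.mem_unitRoots_iff_of_isRootProjection hproj).1 hy.1).2] at hspec
  exact mul_left_cancel₀ two_ne_zero (by simpa using hspec)

theorem sub_mem_unitRoots_of_isRootProjection (h : IsLFRSS (fun x y => b x y) R)
    (hproj : IsRootProjection b R α γ) {y : A} (hy : y ∈ unitRoots b R α γ \ {γ}) :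
    γ - y ∈ unitRoots b R α γ \ {γ} := by
  have hyγ := ((h.mem_unitRoots_iff_of_isRootProjection hproj).1 hy.1).2
  have hmem := h.sub_mem_realRoots hy.1.1.1 hproj.1 (by omega) fun e => hy.2 e.symm
  have hnorm := h.two_mul_form_self_of_isRootProjection hproj hy
  have hform := h.form_of_isRootProjection hproj hy
  refine ⟨(h.mem_unitRoots_iff_of_isRootProjection hproj).2 ⟨?_, ?_⟩, fun e => ?_⟩
  · exact h.mem_of_mem_span (h.isComponentUnion_component γ) hmem (Submodule.sub_mem _
      (Submodule.subset_span (mem_component_self hproj.1)) (Submodule.subset_span hy.1.1))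
  · refine h.coroot_eq_of_eq hmem ?_
    simp only [map_sub, LinearMap.sub_apply, h.form_symm γ y, hform, ← hnorm]
    push_cast
    ring
  · have hy0 : y = 0 := sub_eq_self.1 e
    exact hy.1.1.1.2 (by simp [hy0])

/-- The value of the coroot of `z` at the outer root `α - y` bounds `coroot z y` from below. -/
theorem eq_or_eq_sub_or_coroot_eq_one (h : IsLFRSS (fun x y => b x y) R)
    (hα : IsOuterRoot b R α) (hproj : IsRootProjection b R α γ) {y z : A}
    (hy : y ∈ unitRoots b R α γ \ {γ}) (hz : z ∈ unitRoots b R α γ \ {γ}) :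
    z = y ∨ z = γ - y ∨ coroot b z y = 1 := by
  have hyy := h.two_mul_form_self_of_isRootProjection hproj hy
  have hzz := h.two_mul_form_self_of_isRootProjection hproj hz
  have hnorm : b y y = b z z := mul_left_cancel₀ two_ne_zero (hyy.trans hzz.symm)
  have hnonneg : 0 ≤ coroot b z y := by
    have := h.coroot_lt_two (h.isOuterRoot_sub hα hy.1.1.1 hy.1.2) hz.1.1.1
    rw [map_sub, hz.1.2] at this
    omega
  have hle := (abs_le.1 (h.abs_coroot_le_two_of_self_eq hz.1.1.1 hy.1.1.1 hnorm)).2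
  obtain h0 | h1 | h2 : coroot b z y = 0 ∨ coroot b z y = 1 ∨ coroot b z y = 2 := by omega
  · refine Or.inr (Or.inl (eq_sub_of_add_eq (sub_eq_zero.1 ?_)))
    have hspan : ∀ {x}, x ∈ component b R γ → x ∈ Submodule.span ℤ (component b R γ) :=
      fun hx => Submodule.subset_span hx
    refine h.eq_zero_of_form_self_eq_zero hproj.1 (Submodule.sub_mem _ (Submodule.add_mem _
      (hspan hz.1.1) (hspan hy.1.1)) (hspan (mem_component_self hproj.1))) ?_
    simp only [map_add, map_sub, LinearMap.add_apply, LinearMap.sub_apply, h.form_symm γ,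
      h.form_symm y z, h.form_of_isRootProjection hproj hy,
      h.form_of_isRootProjection hproj hz, (h.coroot_eq_zero hz.1.1.1).1 h0]
    linear_combination -hyy + hnorm
  · exact Or.inr (Or.inr h1)
  · exact Or.inl (h.eq_of_coroot_eq_two hz.1.1.1 hy.1.1.1 hnorm h2)

theorem exists_transversal_unitRoots (h : IsLFRSS (fun x y => b x y) R)
    (hα : IsOuterRoot b R α) (hproj : IsRootProjection b R α γ) :
    ∃ T ⊆ unitRoots b R α γ \ {γ}, (T.Pairwise fun z y => coroot b z y = 1) ∧
      ∀ y ∈ unitRoots b R α γ \ {γ}, y ∈ T ∨ γ - y ∈ T := by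
  refine ⟨{y | y ∈ unitRoots b R α γ \ {γ} ∧ WellOrderingRel y (γ - y)}, fun y hy => hy.1,
    fun z hz y hy hzy => ?_, fun y hy => ?_⟩
  · rcases h.eq_or_eq_sub_or_coroot_eq_one hα hproj hy.1 hz.1 with heq | heq | h1
    · exact absurd heq hzy
    · have hz' := hz.2
      rw [heq, sub_sub_cancel] at hz'
      exact absurd hz' (asymm hy.2)
    · exact h1
  · have hy' := h.sub_mem_unitRoots_of_isRootProjection hproj hy
    rcases trichotomous_of WellOrderingRel y (γ - y) with hlt | heq | hgt
    · exact Or.inl ⟨hy, hlt⟩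
    · have hyγ := ((h.mem_unitRoots_iff_of_isRootProjection hproj).1 hy.1).2
      rw [sub_eq_iff_eq_add.1 heq.symm, map_add, h.coroot_self hy.1.1.1] at hyγ
      omega
    · exact Or.inr ⟨hy', by rwa [sub_sub_cancel]⟩

theorem linearIndepOn_insert_of_isRootProjection (h : IsLFRSS (fun x y => b x y) R)
    (hproj : IsRootProjection b R α γ) {T : Set A} (hT : T ⊆ unitRoots b R α γ \ {γ})
    (hpair : T.Pairwise fun z y => coroot b z y = 1) : LinearIndepOn ℤ id (insert γ T) := by
  have hTR : T ⊆ realRoots b R := fun y hy => (hT hy).1.1.1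
  refine (h.linearIndepOn_of_pairwise hTR hpair).id_insert' fun m hm => ?_
  obtain ⟨l, hl⟩ := (Finsupp.mem_span_iff_linearCombination ℤ T _).1 hm
  have hsum : (l.sum fun _ n => n) = 2 * m := by
    have hγ := congrArg (coroot b γ) hl
    rw [Finsupp.linearCombination_apply, map_finsuppSum, map_smul, h.coroot_self hproj.1,
      smul_eq_mul, mul_comm] at hγ
    rw [← hγ]
    refine Finsupp.sum_congr fun y _ => ?_
    rw [map_smul, h.coroot_eq_one_of_isRootProjection hproj (hT y.2), smul_eq_mul, mul_one]
  have hl0 : l = 0 := by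
    ext z
    have hz := h.coroot_linearCombination_of_pairwise hTR hpair l z
    rw [hl, map_smul, ((h.mem_unitRoots_iff_of_isRootProjection hproj).1 (hT z.2).1).2, hsum,
      smul_eq_mul] at hz
    rw [Finsupp.zero_apply]
    omega
  rw [hl0, Finsupp.sum_zero_index] at hsum
  omega

/-- Otherwise `y - δ` is a real root whose coroot takes the value `2` at `α`. -/
theorem coroot_ne_two_of_isRootProjection (h : IsLFRSS (fun x y => b x y) R)
    (hα : IsOuterRoot b R α) (hproj : IsRootProjection b R α γ) {δ y : A}
    (hδ : δ ∈ component b R γ) (hy : y ∈ component b R γ) (hne : y ≠ δ)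
    (heq : y - coroot b δ y • δ = γ - y) : coroot b δ y ≠ 2 := fun h2 => by
  have hmem := h.sub_mem_realRoots hδ.1 hy.1 (by omega) hne
  have hC := h.mem_of_mem_span (h.isComponentUnion_component γ) hmem
    (Submodule.sub_mem _ (Submodule.subset_span hy) (Submodule.subset_span hδ))
  have hγ : γ = (2 : ℤ) • (y - δ) := by
    rw [sub_eq_iff_eq_add.1 heq.symm, h2]
    module
  have hcoroot : coroot b (y - δ) γ = 4 := by
    conv_lhs => rw [hγ]
    rw [map_smul, h.coroot_self hmem]
    rfl
  have := h.coroot_of_isRootProjection hproj hC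
  have := h.coroot_lt_two hα hmem
  omega

theorem coroot_eq_one_of_pos_of_isRootProjection (h : IsLFRSS (fun x y => b x y) R)
    (hα : IsOuterRoot b R α) (hproj : IsRootProjection b R α γ) {δ y : A}
    (hδ : δ ∈ component b R γ) (hδα : coroot b δ α = 0) (hy : y ∈ unitRoots b R α γ)
    (hpos : 0 < coroot b δ y) : coroot b δ y = 1 := by
  have hδγ : coroot b δ γ = 0 := by rw [h.coroot_of_isRootProjection hproj hδ, hδα, mul_zero]
  have hδy' : coroot b δ (y - coroot b δ y • δ) = -coroot b δ y := by
    rw [map_sub, map_smul, h.coroot_self hδ.1, smul_eq_mul]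
    ring
  have hy' : y - coroot b δ y • δ ∈ unitRoots b R α γ \ {γ} :=
    ⟨h.reflection_mem_unitRoots hδ hδα hy, fun e => by rw [e] at hδy'; omega⟩
  have hy₁ : y ∈ unitRoots b R α γ \ {γ} := ⟨hy, fun e => by rw [e] at hpos; omega⟩
  have hyy' : coroot b y (y - coroot b δ y • δ) = 2 - coroot b δ y * coroot b y δ := by
    rw [map_sub, map_smul, h.coroot_self hy.1.1, smul_eq_mul]
  rcases h.eq_or_eq_sub_or_coroot_eq_one hα hproj hy' hy₁ with heq | heq | h1
  · rw [← heq] at hδy'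
    omega
  · have heq' : y - coroot b δ y • δ = γ - y :=
      eq_sub_iff_add_eq'.2 (eq_sub_iff_add_eq.1 heq)
    rw [heq', map_sub, h.coroot_self hy.1.1,
      ((h.mem_unitRoots_iff_of_isRootProjection hproj).1 hy).2] at hyy'
    have hmul : coroot b δ y * coroot b y δ = 2 := by omega
    have hne : y ≠ δ := fun e => by
      rw [e, h.coroot_self hδ.1] at hmul
      omega
    have hle := Int.le_of_dvd two_pos (Dvd.intro _ hmul)
    have := h.coroot_ne_two_of_isRootProjection hα hproj hδ hy.1 hne heq'
    omega
  · exact Int.eq_one_of_mul_eq_one_right hpos.le (b := coroot b y δ) (by omega)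

theorem exists_base_of_isRootProjection (h : IsLFRSS (fun x y => b x y) R)
    (hα : IsOuterRoot b R α) (htop : Submodule.span ℤ (insert α (realRoots b R)) = ⊤)
    (hproj : IsRootProjection b R α γ) :
    ∃ P ⊆ R, LinearIndepOn ℤ id P ∧ Submodule.span ℤ P = ⊤ := by
  obtain ⟨T, hT, hpair, hcover⟩ := h.exists_transversal_unitRoots hα hproj
  have hC := h.isComponentUnion_component (b := b) (R := R) γ
  have hγC := mem_component_self hproj.1
  refine h.exists_base_of_smul_sub_mem hC
    (Set.insert_subset hγC fun y hy => (hT hy).1.1)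
    (h.linearIndepOn_insert_of_isRootProjection hproj hT hpair) ?_ (Set.mem_insert γ T) hα.mem htop
    (Submodule.mem_sup_right hproj.2)
  rw [← h.span_unitRoots hα hproj.1 (h.self_mem_unitRoots_of_isRootProjection hproj).2
    fun δ hδ hδα y hy => h.coroot_eq_one_of_pos_of_isRootProjection hα hproj hδ hδα hy]
  refine le_antisymm (Submodule.span_mono (Set.insert_subset
    (h.self_mem_unitRoots_of_isRootProjection hproj) fun y hy => (hT hy).1))
    (Submodule.span_le.2 fun y hy => ?_)
  have hγ : γ ∈ Submodule.span ℤ (insert γ T) := Submodule.subset_span (Set.mem_insert _ _)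
  have hTspan : T ⊆ Submodule.span ℤ (insert γ T) :=
    (Set.subset_insert _ _).trans Submodule.subset_span
  rcases eq_or_ne y γ with rfl | hne
  · exact hγ
  · exact (hcover y ⟨hy, hne⟩).elim (fun hyT => hTspan hyT)
      fun hyT => (Submodule.sub_mem_iff_right _ hγ).1 (hTspan hyT)

end IsLFRSS

theorem isRootProjection_of_sub_sub_mem {F : Type*} [Field F] {A : Type*} [AddCommGroup A]
    {b : A →ₗ[ℤ] A →ₗ[ℤ] F} {R : Set A} {α y y' : A} (hy : y ∈ realRoots b R)
    (hy' : y' ∈ realRoots b R \ component b R y)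
    (hz : (2 : ℤ) • α - y - y' ∈ realRoots b R \ component b R y) : IsRootProjection b R α y :=
  ⟨hy, by simpa using Submodule.add_mem _ (Submodule.subset_span hz) (Submodule.subset_span hy')⟩

namespace IsLFRSS

variable {F : Type*} [Field F] [CharZero F] {A : Type*} [AddCommGroup A]
  {b : A →ₗ[ℤ] A →ₗ[ℤ] F} {R : Set A} {α : A}

theorem component_subset_diff_component (h : IsLFRSS (fun x y => b x y) R) {y y' : A}
    (hy : y ∈ realRoots b R) (hy' : y' ∈ realRoots b R \ component b R y) :
    component b R y ⊆ realRoots b R \ component b R y' := fun β hβ => ⟨hβ.1, fun hβy' => hy'.2 <| by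
  rw [← h.component_eq_of_mem hy hβ, h.component_eq_of_mem hy'.1 hβy']
  exact mem_component_self hy'.1⟩

theorem form_eq_zero_of_notMem_component (h : IsLFRSS (fun x y => b x y) R) {y y' : A}
    (hy : y ∈ realRoots b R) (hy' : y' ∈ realRoots b R \ component b R y) : b y y' = 0 :=
  h.form_eq_zero_of_mem_span (h.isComponentUnion_component y)
    (Submodule.subset_span (mem_component_self hy)) (Submodule.subset_span hy')

theorem add_notMem_realRoots (h : IsLFRSS (fun x y => b x y) R) {y y' : A}
    (hy : y ∈ realRoots b R) (hy' : y' ∈ realRoots b R \ component b R y) :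
    y + y' ∉ realRoots b R := fun hz => by
  have hyy' := h.form_eq_zero_of_notMem_component hy hy'
  have hC := h.isComponentUnion_component (b := b) (R := R) y
  have hzC := hC.mem_of_form_ne_zero y (mem_component_self hy) _ hz (by simpa [hyy'] using hy.2)
  refine hy'.2 (hC.mem_of_form_ne_zero _ hzC y' hy'.1 ?_)
  simpa [hyy'] using hy'.1.2

/-- Otherwise `α` and `α - y - y'` are not orthogonal, so that `y + y'` or `2 • α - y - y'` is a
real root. -/
theorem form_self_add_form_self_eq_zero (h : IsLFRSS (fun x y => b x y) R)
    (hα : IsOuterRoot b R α) (hno : ∀ γ, ¬IsRootProjection b R α γ) {y y' : A}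
    (hy : y ∈ realRoots b R) (hyα : coroot b y α = 1) (hy' : y' ∈ realRoots b R \ component b R y)
    (hyα' : coroot b y' α = 1) : b y y + b y' y' = 0 := by
  have hyy' := h.form_eq_zero_of_notMem_component hy hy'
  have hout : IsOuterRoot b R (α - y - y') := by
    refine h.isOuterRoot_sub (h.isOuterRoot_sub hα hy hyα) hy'.1 ?_
    rw [map_sub, hyα', (h.coroot_eq_zero hy'.1).2 (by rwa [h.form_symm]), sub_zero]
  by_contra hne
  have hform : b α (α - y - y') ≠ 0 := fun h0 => hne <| by
    rw [map_sub, map_sub, hα.isotropic, h.form_symm α y, h.form_symm α y'] at h0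
    linear_combination -2 * h0 - h.two_mul_form_of_coroot_eq_one hy hyα
      - h.two_mul_form_of_coroot_eq_one hy'.1 hyα'
  rcases h.sub_or_add_mem_realRoots hα.mem hα.isotropic hout.mem hout.isotropic hform with hz | hz
  · refine h.add_notMem_realRoots hy hy' ?_
    convert h.neg_mem_realRoots hz using 1
    abel
  · have hz₁ : (2 : ℤ) • α - y - y' ∈ realRoots b R := by
      convert hz using 1
      module
    by_cases hzC : (2 : ℤ) • α - y - y' ∈ component b R y
    · refine hno y' (isRootProjection_of_sub_sub_mem hy'.1
        (h.component_subset_diff_component hy hy' (mem_component_self hy)) ?_)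
      rw [sub_right_comm]
      refine ⟨hz₁, fun hzC' => hy'.2 ?_⟩
      rw [← h.component_eq_of_mem hy hzC, h.component_eq_of_mem hy'.1 hzC']
      exact mem_component_self hy'.1
    · exact hno y (isRootProjection_of_sub_sub_mem hy hy' ⟨hz₁, hzC⟩)

theorem isRootProjection_of_sub_mem_span (h : IsLFRSS (fun x y => b x y) R) {η ζ : A}
    (hη : η ∈ realRoots b R) (hζ : ζ ∈ realRoots b R \ component b R η)
    (hspan : (2 : ℤ) • α - ζ ∈ Submodule.span ℤ (component b R η)) : IsRootProjection b R α ζ :=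
  ⟨hζ.1, Submodule.span_mono (h.component_subset_diff_component hη hζ) hspan⟩

theorem form_self_add_form_self_ne_zero (h : IsLFRSS (fun x y => b x y) R) {η x y : A}
    (hη : η ∈ realRoots b R) (hx : x ∈ Submodule.span ℤ (component b R η)) (hx0 : x ≠ 0)
    (hy : y ∈ Submodule.span ℤ (component b R η)) (hy0 : y ≠ 0) : b x x + b y y ≠ 0 := by
  obtain ⟨k, hk0, hk⟩ := h.exists_pos_mul_form_self hη hx hx0
  obtain ⟨l, hl0, hl⟩ := h.exists_pos_mul_form_self hη hy hy0
  intro h0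
  have hkl : ((k + l : ℤ) : F) * b η η = 0 := by
    push_cast
    linear_combination 288 * h0 - hk - hl
  exact mul_ne_zero (by exact_mod_cast (add_pos hk0 hl0).ne') hη.2 hkl

theorem mem_unitRoots_of_isOuterRoot_sub (h : IsLFRSS (fun x y => b x y) R)
    (hα : IsOuterRoot b R α) (hno : ∀ γ, ¬IsRootProjection b R α γ) {η t : A}
    (hη : η ∈ realRoots b R) (ht : t ∈ Submodule.span ℤ (component b R η)) (ht0 : t ≠ 0)
    (hout : IsOuterRoot b R (α - t)) : t ∈ unitRoots b R α η := by
  have htt : b t t = 2 * b α t := by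
    have := hout.isotropic
    simp only [map_sub, LinearMap.sub_apply, hα.isotropic, h.form_symm t α] at this
    linear_combination this
  have hform : b α (α - t) ≠ 0 := fun h0 => ht0 <| h.eq_zero_of_form_self_eq_zero hη ht <| by
    rw [map_sub, hα.isotropic, zero_sub, neg_eq_zero] at h0
    rw [htt, h0, mul_zero]
  rcases h.sub_or_add_mem_realRoots hα.mem hα.isotropic hout.mem hout.isotropic hform with hz | hz
  · have htR : t ∈ realRoots b R := by
      convert h.neg_mem_realRoots hz using 1
      abel
    refine ⟨h.mem_of_mem_span (h.isComponentUnion_component η) htR ht, h.coroot_eq_of_eq htR ?_⟩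
    rw [h.form_symm t α, htt, Int.cast_one, one_mul]
  · have hzz : b (α - t + α) (α - t + α) = -b t t := by
      simp only [map_add, LinearMap.add_apply, map_sub, LinearMap.sub_apply, hα.isotropic,
        h.form_symm t α]
      linear_combination 2 * htt
    by_cases hzC : α - t + α ∈ component b R η
    · have hz0 : α - t + α ≠ 0 := fun h0 => hz.2 (by simp [h0])
      exact absurd (by rw [hzz, neg_add_cancel])
        (h.form_self_add_form_self_ne_zero hη (Submodule.subset_span hzC) hz0 ht ht0)
    · refine absurd (h.isRootProjection_of_sub_mem_span hη ⟨hz, hzC⟩ ?_) (hno _)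
      convert ht using 1
      module

theorem pairwise_unitRoots (h : IsLFRSS (fun x y => b x y) R) (hα : IsOuterRoot b R α)
    (hno : ∀ γ, ¬IsRootProjection b R α γ) {η : A} (hη : η ∈ realRoots b R)
    (hnorm : ∀ y ∈ unitRoots b R α η, b y y = b η η) :
    (unitRoots b R α η).Pairwise fun z y => coroot b z y = 1 := fun z hz y hy hzy => by
  have heq : b y y = b z z := (hnorm y hy).trans (hnorm z hz).symm
  have hout := h.isOuterRoot_sub hα hy.1.1 hy.2
  have hnonneg := h.coroot_lt_two hout hz.1.1
  have hle := (abs_le.1 (h.abs_coroot_le_two_of_self_eq hz.1.1 hy.1.1 heq)).2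
  have hne2 : coroot b z y ≠ 2 := fun h2 => hzy (h.eq_of_coroot_eq_two hz.1.1 hy.1.1 heq h2)
  have hcoroot : coroot b z (α - y) = 1 - coroot b z y := by rw [map_sub, hz.2]
  have hne0 : coroot b z y ≠ 0 := fun h0 => by
    have hout' := h.isOuterRoot_sub hout hz.1.1 (by omega)
    rw [sub_sub] at hout'
    have hsum0 : y + z ≠ 0 := fun h00 => by
      have := congrArg (coroot b z) h00
      rw [map_add, h0, h.coroot_self hz.1.1, map_zero] at this
      omega
    have hmem := h.mem_unitRoots_of_isOuterRoot_sub hα hno hη (Submodule.add_mem _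
      (Submodule.subset_span hy.1) (Submodule.subset_span hz.1)) hsum0 hout'
    have hform := (h.coroot_eq_zero hz.1.1).1 h0
    have hsum := (hnorm _ hmem).trans (hnorm z hz).symm
    simp only [map_add, LinearMap.add_apply, h.form_symm y z, hform, heq, zero_add, add_zero,
      add_eq_left] at hsum
    exact hz.1.1.2 hsum
  omega

theorem span_unitRoots_of_pairwise (h : IsLFRSS (fun x y => b x y) R) (hα : IsOuterRoot b R α)
    {η : A} (hη : η ∈ realRoots b R) (hηα : coroot b η α = 1)
    (hpair : (unitRoots b R α η).Pairwise fun z y => coroot b z y = 1) :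
    Submodule.span ℤ (unitRoots b R α η) = Submodule.span ℤ (component b R η) := by
  refine h.span_unitRoots hα hη hηα fun δ hδ hδα y hy hpos => ?_
  have hy' := h.reflection_mem_unitRoots hδ hδα hy
  have hne : y ≠ y - coroot b δ y • δ := fun e => by
    have := congrArg (coroot b δ) e
    rw [map_sub, map_smul, h.coroot_self hδ.1, smul_eq_mul] at this
    omega
  have hone : coroot b y (y - coroot b δ y • δ) = 1 := hpair hy hy' hne
  rw [map_sub, map_smul, h.coroot_self hy.1.1, smul_eq_mul] at hone
  exact Int.eq_one_of_mul_eq_one_right hpos.le (b := coroot b y δ) (by omega)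

theorem exists_eq_smul_sum_of_pairwise (h : IsLFRSS (fun x y => b x y) R) {T : Set A}
    (hT : T ⊆ realRoots b R) (hpair : T.Pairwise fun z y => coroot b z y = 1) {x : A} {k : ℤ}
    (hx : x ∈ Submodule.span ℤ T) (hk : k ≠ 0) (hcoroot : ∀ z ∈ T, coroot b z x = k) :
    ∃ (s : Finset A) (c : ℤ), s = T ∧ x = c • ∑ z ∈ s, z ∧ k = c * (1 + s.card) := by
  classical
  obtain ⟨l, rfl⟩ := (Finsupp.mem_span_iff_linearCombination ℤ T _).1 hx
  set c := k - l.sum fun _ n => n with hc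
  have hconst : ∀ z, l z = c := fun z =>
    eq_sub_of_add_eq ((h.coroot_linearCombination_of_pairwise hT hpair l z).symm.trans
      (hcoroot z z.2))
  have hc0 : c ≠ 0 := fun h0 => by
    have hl : l = 0 := Finsupp.ext fun z => (hconst z).trans h0
    rw [hl, Finsupp.sum_zero_index] at hc
    omega
  have hsupp : ∀ z, z ∈ l.support := fun z => Finsupp.mem_support_iff.2 (by rwa [hconst z])
  refine ⟨l.support.map (Function.Embedding.subtype _), c, ?_, ?_, ?_⟩
  · ext z
    simp only [Finset.coe_map, Function.Embedding.subtype_apply, Set.mem_image, Finset.mem_coe]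
    exact ⟨fun ⟨z, _, hz⟩ => hz ▸ z.2, fun hz => ⟨⟨z, hz⟩, hsupp _, rfl⟩⟩
  · rw [Finset.sum_map, Finset.smul_sum, Finsupp.linearCombination_apply, Finsupp.sum]
    exact Finset.sum_congr rfl fun z _ => by rw [hconst]; rfl
  · have hsum : (l.sum fun _ n => n) = l.support.card * c := by
      rw [Finsupp.sum, Finset.sum_congr rfl fun z _ => hconst z, Finset.sum_const, nsmul_eq_mul]
    rw [Finset.card_map]
    linear_combination hsum - hc

end IsLFRSS

namespace IsLFRSS

variable {F : Type*} [Field F] [CharZero F] {A : Type*} [AddCommGroup A]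
  {b : A →ₗ[ℤ] A →ₗ[ℤ] F} {R S : Set A} {α η η' x : A} {k : ℤ}

theorem exists_notMem_coroot_eq_one (h : IsLFRSS (fun x y => b x y) R) (hα : IsOuterRoot b R α)
    (hmem : k • α ∈ Submodule.span ℤ (realRoots b R)) (hS : IsComponentUnion b R S)
    (hnot : k • α ∉ Submodule.span ℤ S) : ∃ y ∈ realRoots b R \ S, coroot b y α = 1 := by
  by_contra! hne
  refine hnot (h.mem_span_of_forall_form_eq_zero hS hmem fun β hβ hβS => ?_)
  by_contra hβα
  rw [map_smul, zsmul_eq_mul] at hβα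
  obtain ⟨y, hy, hyα, -⟩ := h.exists_coroot_eq_one hα (h.isComponentUnion_diff hS) ⟨hβ, hβS⟩
    (right_ne_zero_of_mul hβα)
  exact hne y hy hyα

theorem smul_ne_zero_of_isOuterRoot (h : IsLFRSS (fun x y => b x y) R) (hα : IsOuterRoot b R α)
    (hk : k ≠ 0) : k • α ≠ 0 := fun h0 =>
  hα.notMem_span (by rw [h.eq_zero_of_smul_eq_zero hk h0]; exact zero_mem _)

theorem exists_smul_mem_span_union_component (h : IsLFRSS (fun x y => b x y) R)
    (hα : IsOuterRoot b R α) (hno : ∀ γ, ¬IsRootProjection b R α γ) (hk : k ≠ 0)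
    (hmem : k • α ∈ Submodule.span ℤ (realRoots b R)) :
    ∃ η ∈ realRoots b R, coroot b η α = 1 ∧ ∃ η' ∈ realRoots b R \ component b R η,
      coroot b η' α = 1 ∧ k • α ∈ Submodule.span ℤ (component b R η ∪ component b R η') := by
  have hkα := h.smul_ne_zero_of_isOuterRoot hα hk
  obtain ⟨η, hη, hηα⟩ := h.exists_notMem_coroot_eq_one hα hmem (S := ∅)
    ⟨Set.empty_subset _, by simp⟩ (by simpa using hkα)
  have hC := h.isComponentUnion_component (b := b) (R := R) η
  obtain ⟨η', hη', hη'α⟩ := h.exists_notMem_coroot_eq_one hα hmem hC fun hspan =>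
    hkα (h.eq_zero_of_form_self_eq_zero hη.1 hspan (by simp [hα.isotropic]))
  have hC' := h.isComponentUnion_component (b := b) (R := R) η'
  refine ⟨η, hη.1, hηα, η', hη', hη'α, by_contra fun hspan => ?_⟩
  obtain ⟨ζ, hζ, hζα⟩ := h.exists_notMem_coroot_eq_one hα hmem (hC.union hC') hspan
  have h₁ := h.form_self_add_form_self_eq_zero hα hno hη.1 hηα hη' hη'α
  have h₂ := h.form_self_add_form_self_eq_zero hα hno hη.1 hηα
    ⟨hζ.1, fun hm => hζ.2 (Or.inl hm)⟩ hζα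
  have h₃ := h.form_self_add_form_self_eq_zero hα hno hη'.1 hη'α
    ⟨hζ.1, fun hm => hζ.2 (Or.inr hm)⟩ hζα
  refine hη.1.2 (mul_left_cancel₀ (two_ne_zero (α := F)) ?_)
  linear_combination h₁ + h₂ - h₃

theorem form_self_eq_of_mem_unitRoots (h : IsLFRSS (fun x y => b x y) R)
    (hα : IsOuterRoot b R α) (hno : ∀ γ, ¬IsRootProjection b R α γ) (hη : η ∈ realRoots b R)
    (hηα : coroot b η α = 1) (hη' : η' ∈ realRoots b R \ component b R η)
    (hη'α : coroot b η' α = 1) {y : A} (hy : y ∈ unitRoots b R α η) : b y y = b η η := by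
  have hsum := h.form_self_add_form_self_eq_zero hα hno hη hηα hη' hη'α
  rw [← h.component_eq_of_mem hη hy.1] at hη'
  linear_combination h.form_self_add_form_self_eq_zero hα hno hy.1.1 hy.2 hη' hη'α - hsum

theorem two_mul_form_sum (h : IsLFRSS (fun x y => b x y) R) {s : Finset A} {n : F}
    (hs : ∀ y ∈ s, y ∈ realRoots b R ∧ coroot b y α = 1 ∧ b y y = n) :
    2 * b (∑ y ∈ s, y) α = s.card * n := by
  rw [map_sum, LinearMap.sum_apply, Finset.mul_sum, ← nsmul_eq_mul]
  refine Finset.sum_eq_card_nsmul fun y hy => ?_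
  obtain ⟨hyR, hyα, hyy⟩ := hs y hy
  rw [h.two_mul_form_of_coroot_eq_one hyR hyα, hyy]

theorem exists_eq_smul_sum_unitRoots (h : IsLFRSS (fun x y => b x y) R) (hα : IsOuterRoot b R α)
    (hno : ∀ γ, ¬IsRootProjection b R α γ) (hη : η ∈ realRoots b R) (hηα : coroot b η α = 1)
    (hnorm : ∀ y ∈ unitRoots b R α η, b y y = b η η) (hk : k ≠ 0)
    (hx : x ∈ Submodule.span ℤ (component b R η))
    (hx' : k • α - x ∈ Submodule.span ℤ (realRoots b R \ component b R η)) :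
    ∃ (s : Finset A) (c : ℤ), s = unitRoots b R α η ∧ x = c • ∑ y ∈ s, y ∧
      k = c * (1 + s.card) ∧ 2 * b (∑ y ∈ s, y) α = s.card * b η η := by
  have hpair := h.pairwise_unitRoots hα hno hη hnorm
  rw [← h.span_unitRoots_of_pairwise hα hη hηα hpair] at hx
  obtain ⟨s, c, hs, hxs, hkc⟩ := h.exists_eq_smul_sum_of_pairwise unitRoots_subset_realRoots hpair
    hx hk fun y hy => by
      have hyx := (h.coroot_eq_zero hy.1.1).2 (h.form_eq_zero_of_mem_span
        (h.isComponentUnion_component η) (Submodule.subset_span hy.1) hx')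
      rw [map_sub, map_smul, hy.2, smul_eq_mul, mul_one] at hyx
      omega
  refine ⟨s, c, hs, hxs, hkc, h.two_mul_form_sum fun y hy => ?_⟩
  have hy : y ∈ unitRoots b R α η := hs ▸ hy
  exact ⟨hy.1.1, hy.2, hnorm y hy⟩

/-- The norms of the projections of `α` to the two components cancel, which makes the coefficients
of the two sums of unit roots equal. -/
theorem exists_smul_eq_sum_add_sum (h : IsLFRSS (fun x y => b x y) R) (hα : IsOuterRoot b R α)
    (hno : ∀ γ, ¬IsRootProjection b R α γ) (hη : η ∈ realRoots b R) (hηα : coroot b η α = 1)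
    (hη' : η' ∈ realRoots b R \ component b R η) (hη'α : coroot b η' α = 1) (hk : k ≠ 0)
    (hmem : k • α ∈ Submodule.span ℤ (component b R η ∪ component b R η')) :
    ∃ s s' : Finset A, s = unitRoots b R α η ∧ s' = unitRoots b R α η' ∧
      (1 + s.card : ℤ) • α = ∑ y ∈ s, y + ∑ y ∈ s', y := by
  have hle := h.component_subset_diff_component hη hη'
  have hηη' := hle (mem_component_self hη)
  have hle' := h.component_subset_diff_component hη'.1 hηη'
  rw [Submodule.span_union, Submodule.mem_sup] at hmem
  obtain ⟨x, hx, x', hx', hxx'⟩ := hmem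
  obtain ⟨s, c, hs, rfl, hkc, hform⟩ := h.exists_eq_smul_sum_unitRoots hα hno hη hηα
    (fun _ => h.form_self_eq_of_mem_unitRoots hα hno hη hηα hη' hη'α) hk hx
    (by simpa [← hxx'] using Submodule.span_mono hle' hx')
  obtain ⟨s', c', hs', rfl, hkc', hform'⟩ := h.exists_eq_smul_sum_unitRoots hα hno hη'.1 hη'α
    (fun _ => h.form_self_eq_of_mem_unitRoots hα hno hη'.1 hη'α hηη' hηα) hk hx'
    (by simpa [← hxx'] using Submodule.span_mono hle hx)
  have hcard : c * s.card = c' * s'.card := by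
    have hzero := congrArg (fun x => b x α) hxx'
    simp only [map_add, map_smul, LinearMap.add_apply, LinearMap.smul_apply, zsmul_eq_mul,
      hα.isotropic, mul_zero] at hzero
    have hnorm := h.form_self_add_form_self_eq_zero hα hno hη hηα hη' hη'α
    have hmul : ((c * s.card - c' * s'.card : ℤ) : F) * b η η = 0 := by
      push_cast
      linear_combination 2 * hzero - c * hform - c' * hform' - c' * s'.card * hnorm
    exact sub_eq_zero.1 (by exact_mod_cast (mul_eq_zero.1 hmul).resolve_right hη.2)
  obtain rfl : c = c' := by linear_combination hkc' - hkc - hcard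
  have hc : c ≠ 0 := left_ne_zero_of_mul (hkc ▸ hk)
  refine ⟨s, s', hs, hs', sub_eq_zero.1 (h.eq_zero_of_smul_eq_zero hc ?_)⟩
  rw [smul_sub, ← mul_smul, ← hkc, smul_add, hxx', sub_self]

theorem exists_base_of_forall_not_isRootProjection (h : IsLFRSS (fun x y => b x y) R)
    (hα : IsOuterRoot b R α) (htop : Submodule.span ℤ (insert α (realRoots b R)) = ⊤)
    (hno : ∀ γ, ¬IsRootProjection b R α γ) (hk : k ≠ 0)
    (hmem : k • α ∈ Submodule.span ℤ (realRoots b R)) :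
    ∃ P ⊆ R, LinearIndepOn ℤ id P ∧ Submodule.span ℤ P = ⊤ := by
  classical
  obtain ⟨η, hη, hηα, η', hη', hη'α, hspan⟩ :=
    h.exists_smul_mem_span_union_component hα hno hk hmem
  obtain ⟨s, s', hs, hs', hsum⟩ := h.exists_smul_eq_sum_add_sum hα hno hη hηα hη' hη'α hk hspan
  have hpair := h.pairwise_unitRoots hα hno hη
    fun _ => h.form_self_eq_of_mem_unitRoots hα hno hη hηα hη' hη'α
  have hηK : η ∈ unitRoots b R α η := ⟨mem_component_self hη, hηα⟩
  have hηs : η ∈ s := Finset.mem_coe.1 (hs ▸ hηK)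
  refine h.exists_base_of_smul_sub_mem (h.isComponentUnion_component η) (fun _ hy => hy.1)
    (h.linearIndepOn_of_pairwise unitRoots_subset_realRoots hpair)
    (h.span_unitRoots_of_pairwise hα hη hηα hpair) hηK hα.mem htop (k := 1 + s.card) ?_
  have hη'η := h.component_subset_diff_component hη hη' (mem_component_self hη)
  rw [hsum, ← Finset.add_sum_erase s _ hηs, add_assoc, add_sub_cancel_left]
  refine Submodule.add_mem_sup (sum_mem fun y hy => Submodule.subset_span ?_)
    (sum_mem fun y hy => Submodule.subset_span ?_)
  · rw [← hs]
    exact ⟨Finset.mem_of_mem_erase hy, Finset.ne_of_mem_erase hy⟩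
  · have hyK : y ∈ unitRoots b R α η' := hs' ▸ hy
    exact h.component_subset_diff_component hη'.1 hη'η hyK.1

theorem exists_base_of_isOuterRoot (h : IsLFRSS (fun x y => b x y) R)
    (hα : IsOuterRoot b R α) (htop : Submodule.span ℤ (insert α (realRoots b R)) = ⊤) :
    ∃ P ⊆ R, LinearIndepOn ℤ id P ∧ Submodule.span ℤ P = ⊤ := by
  by_cases hfree : ∀ k : ℤ, k • α ∈ Submodule.span ℤ (realRoots b R) → k = 0
  · obtain ⟨P, hP, hind, hspan⟩ := h.exists_base_of_isComponentUnion isComponentUnion_realRoots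
    refine ⟨insert α P, Set.insert_subset hα.mem fun y hy => (hP hy).1,
      hind.id_insert' fun k hk => hfree k (hspan ▸ hk), ?_⟩
    rw [Submodule.span_insert, hspan, ← Submodule.span_insert, htop]
  · push Not at hfree
    obtain ⟨k, hmem, hk⟩ := hfree
    by_cases hproj : ∃ γ, IsRootProjection b R α γ
    · exact hproj.elim fun γ hγ => h.exists_base_of_isRootProjection hα htop hγ
    · exact h.exists_base_of_forall_not_isRootProjection hα htop (not_exists.1 hproj) hk hmem

theorem exists_base (h : IsLFRSS (fun x y => b x y) R)
    (hconn : IsConnectedSet (fun x y => b x y) (R \ formRadical fun x y => b x y)) :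
    ∃ P ⊆ R, LinearIndepOn ℤ id P ∧ Submodule.span ℤ P = ⊤ := by
  by_cases hR : R ⊆ Submodule.span ℤ (realRoots b R)
  · obtain ⟨P, hP, hind, hspan⟩ := h.exists_base_of_isComponentUnion isComponentUnion_realRoots
    exact ⟨P, hP.trans fun y hy => hy.1, hind,
      hspan.trans (top_le_iff.1 (h.span_eq_top ▸ Submodule.span_le.2 hR))⟩
  · obtain ⟨α, hαR, hα⟩ := Set.not_subset.1 hR
    have hisotropic : b α α = 0 := by_contra fun hne => hα (Submodule.subset_span ⟨hαR, hne⟩)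
    have hα0 : α ≠ 0 := fun h0 => hα (h0 ▸ zero_mem _)
    exact h.exists_base_of_isOuterRoot ⟨hαR, hisotropic, hα⟩
      (h.span_insert_isotropic_eq_top hconn hαR hα0 hisotropic)

end IsLFRSS

theorem IsSymForm.exists_linearMap {F : Type*} [Field F] {A : Type*} [AddCommGroup A]
    {form : A → A → F} (h : IsSymForm form) :
    ∃ b : A →ₗ[ℤ] A →ₗ[ℤ] F, (fun x y => b x y) = form := by
  have add_right : ∀ x y z, form x (y + z) = form x y + form x z := fun x y z => by
    rw [h.symm, h.add_left, h.symm y, h.symm z]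
  have smul_right : ∀ (n : ℤ) x y, form x (n • y) = n • form x y := fun n x y =>
    map_zsmul (AddMonoidHom.mk' (form x) (add_right x)) n y
  refine ⟨LinearMap.mk₂ ℤ form h.add_left (fun n x y => ?_) add_right smul_right, rfl⟩
  rw [h.symm, smul_right, h.symm]

theorem stmt16 {F : Type*} [Field F] [CharZero F] {A : Type*} [AddCommGroup A]
    (form : A → A → F) (R : Set A) (h : IsLFRSS form R) (hirr : IsIrreducibleRSS form R) :
    (∃ P : Set A, P ⊆ R ∧ LinearIndependent ℤ (fun p : P => (p : A)) ∧
      Submodule.span ℤ P = (⊤ : Submodule ℤ A)) ∧ Module.Free ℤ A := by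
  obtain ⟨b, rfl⟩ := h.1.toIsSymForm.exists_linearMap
  obtain ⟨P, hPR, hind, hspan⟩ := h.exists_base hirr.2
  exact ⟨⟨P, hPR, hind, hspan⟩, Module.Free.of_basis (Module.Basis.mk hind (by simp [hspan]))⟩
end
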